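/- arXiv:1011.3654 — 12 statements merged into one kernel-verified Lean document; each statement's English description precedes it below -/
import Mathlib

section
/- For all d, d' ∈ ℕ^ℓ, the commutator of the deformed operators satisfies, as linear operators on K[X]: D_{q,d} ∘ D_{q,d'} − D_{q,d'} ∘ D_{q,d} = q·(|d| − |d'|)·D_{q,d+d'}. -/
open MvPolynomial

/-- The operator `∂_j^d = ∂_{1j}^{d 1} ⋯ ∂_{ℓj}^{d ℓ}` on `K[X]`,
`X` an `ℓ × n` matrix of variables. -/
noncomputable def pdj {K : Type*} [Field K] {ℓ n : ℕ} (d : Fin ℓ → ℕ) (j : Fin n) :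
    Module.End K (MvPolynomial (Fin ℓ × Fin n) K) :=
  ((List.finRange ℓ).map fun i =>
    ((pderiv (i, j)).toLinearMap : Module.End K (MvPolynomial (Fin ℓ × Fin n) K)) ^ d i).prod

/-- The deformed operator
`D_{q,d} = ∑_j (1 + q (x_{1j}∂_{1j} + ⋯ + x_{ℓj}∂_{ℓj})) ∘ ∂_j^d` on `K[X]`. -/
noncomputable def Dq {K : Type*} [Field K] (ℓ n : ℕ) (q : K) (d : Fin ℓ → ℕ) :
    Module.End K (MvPolynomial (Fin ℓ × Fin n) K) :=
  ∑ j : Fin n,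
    (1 + q • ∑ i : Fin ℓ,
        (LinearMap.mulLeft K (X (i, j)) * (pderiv (i, j)).toLinearMap)) * pdj d j

section Helpers

variable {K : Type*} [Field K] {ℓ n : ℕ}

/-- Partial derivative as an endomorphism. -/
noncomputable def pEnd (a : Fin ℓ × Fin n) : Module.End K (MvPolynomial (Fin ℓ × Fin n) K) :=
  (pderiv a).toLinearMap

/-- Euler derivation of column `j`. -/
noncomputable def eulerDer (j : Fin n) :
    Derivation K (MvPolynomial (Fin ℓ × Fin n) K) (MvPolynomial (Fin ℓ × Fin n) K) :=
  ∑ i : Fin ℓ, (X (i, j) : MvPolynomial (Fin ℓ × Fin n) K) • pderiv (i, j)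

/-- Euler operator of column `j`. -/
noncomputable def eulerEnd (j : Fin n) : Module.End K (MvPolynomial (Fin ℓ × Fin n) K) :=
  ∑ i : Fin ℓ, (LinearMap.mulLeft K (X (i, j)) * (pderiv (i, j)).toLinearMap)

theorem eulerDer_apply (j : Fin n) (p : MvPolynomial (Fin ℓ × Fin n) K) :
    eulerDer j p = ∑ i : Fin ℓ, X (i, j) * pderiv (i, j) p := by
  have key : ∀ s : Finset (Fin ℓ),
      (∑ i ∈ s, (X (i, j) : MvPolynomial (Fin ℓ × Fin n) K) • pderiv (i, j) :
        Derivation K (MvPolynomial (Fin ℓ × Fin n) K) (MvPolynomial (Fin ℓ × Fin n) K)) p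
      = ∑ i ∈ s, X (i, j) * pderiv (i, j) p := by
    intro s
    induction s using Finset.induction_on with
    | empty => simp
    | insert a s ha ih =>
      rw [Finset.sum_insert ha, Finset.sum_insert ha, Derivation.add_apply, ih,
        Derivation.smul_apply, smul_eq_mul]
  exact key _

theorem eulerEnd_eq (j : Fin n) :
    (eulerEnd j : Module.End K (MvPolynomial (Fin ℓ × Fin n) K)) = (eulerDer j).toLinearMap := by
  refine LinearMap.ext fun p => ?_
  change _ = eulerDer j p
  rw [eulerDer_apply]
  simp [eulerEnd, LinearMap.sum_apply]

theorem eulerDer_X (j : Fin n) (a : Fin ℓ × Fin n) :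
    (eulerDer j : Derivation K (MvPolynomial (Fin ℓ × Fin n) K) _) (X a)
      = if a.2 = j then X a else 0 := by
  obtain ⟨i, k⟩ := a
  simp only [eulerDer_apply, pderiv_X,
    Pi.single_apply, Prod.mk.injEq, mul_ite, mul_one, mul_zero]
  by_cases h : k = j
  · subst h; simp
  · simp [h]

theorem comm_of_X (A B C : Derivation K (MvPolynomial (Fin ℓ × Fin n) K)
    (MvPolynomial (Fin ℓ × Fin n) K))
    (h : ∀ a, A (B (X a)) - B (A (X a)) = C (X a)) :
    (A.toLinearMap : Module.End K _) * B.toLinearMap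
      = B.toLinearMap * A.toLinearMap + C.toLinearMap := by
  have : ⁅A, B⁆ = C := by
    apply MvPolynomial.derivation_ext
    intro a
    rw [Derivation.commutator_apply, h]
  refine LinearMap.ext fun p => ?_
  have h2 := congrArg (fun D => D p) this
  simp only [Derivation.commutator_apply] at h2
  simp [← h2]

theorem pEnd_comm (a b : Fin ℓ × Fin n) : Commute (pEnd (K := K) a) (pEnd b) := by
  have := comm_of_X (K := K) (pderiv a) (pderiv b) 0 (by
    intro c
    simp only [pderiv_X, Pi.single_apply]
    split_ifs <;> simp)
  simpa [Commute, SemiconjBy, pEnd] using this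

theorem euler_comm (j k : Fin n) : Commute (eulerEnd (K := K) (ℓ := ℓ) j) (eulerEnd k) := by
  have := comm_of_X (K := K) (ℓ := ℓ) (eulerDer j) (eulerDer k) 0 (by
    intro c
    have hj := eulerDer_X (K := K) j c
    have hk := eulerDer_X (K := K) k c
    by_cases h1 : c.2 = j
    · rw [if_pos h1] at hj
      by_cases h2 : c.2 = k
      · rw [if_pos h2] at hk; simp [hj, hk]
      · rw [if_neg h2] at hk; simp [hj, hk]
    · rw [if_neg h1] at hj
      by_cases h2 : c.2 = k
      · rw [if_pos h2] at hk; simp [hj, hk]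
      · rw [if_neg h2] at hk; simp [hj, hk])
  simpa [Commute, SemiconjBy, eulerEnd_eq] using this

theorem pEnd_euler (i : Fin ℓ) (j k : Fin n) :
    pEnd (K := K) (i, j) * eulerEnd k
      = eulerEnd k * pEnd (i, j) + (if j = k then (1 : K) else 0) • pEnd (i, j) := by
  have := comm_of_X (K := K) (ℓ := ℓ) (pderiv (i, j)) (eulerDer k)
    ((if j = k then (1 : K) else 0) • pderiv (i, j)) (by
    rintro ⟨i', j'⟩
    simp only [eulerDer_X, pderiv_X, Pi.single_apply, Derivation.smul_apply, Prod.mk.injEq]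
    by_cases h1 : i' = i <;> by_cases h2 : j' = j <;> by_cases h3 : j = k <;>
      by_cases h4 : j' = k <;> simp_all [pderiv_X, Pi.single_apply])
  rw [eulerEnd_eq]
  exact this

theorem shift_mul {A B E : Module.End K (MvPolynomial (Fin ℓ × Fin n) K)} {a b : K}
    (hA : A * E = E * A + a • A) (hB : B * E = E * B + b • B) :
    (A * B) * E = E * (A * B) + (a + b) • (A * B) := by
  rw [mul_assoc, hB, mul_add, ← mul_assoc, hA, add_mul, mul_smul_comm, smul_mul_assoc, add_smul,
    mul_assoc]
  abel

theorem shift_pow {A E : Module.End K (MvPolynomial (Fin ℓ × Fin n) K)} {a : K}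
    (hA : A * E = E * A + a • A) (m : ℕ) :
    A ^ m * E = E * A ^ m + ((m : K) * a) • A ^ m := by
  induction m with
  | zero => simp
  | succ m ih =>
    rw [pow_succ, shift_mul ih hA]
    congr 2
    push_cast
    ring

theorem pdj_euler (d : Fin ℓ → ℕ) (j k : Fin n) :
    pdj (K := K) d j * eulerEnd k
      = eulerEnd k * pdj d j + (if j = k then ∑ i, (d i : K) else 0) • pdj d j := by
  have key : ∀ l : List (Fin ℓ),
      (l.map fun i => pEnd (K := K) (i, j) ^ d i).prod * eulerEnd k
      = eulerEnd k * (l.map fun i => pEnd (K := K) (i, j) ^ d i).prod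
        + (l.map fun i => (d i : K) * (if j = k then (1 : K) else 0)).sum
          • (l.map fun i => pEnd (K := K) (i, j) ^ d i).prod := by
    intro l
    induction l with
    | nil => simp
    | cons i l ih =>
      simp only [List.map_cons, List.prod_cons, List.sum_cons]
      exact shift_mul (shift_pow (pEnd_euler i j k) _) ih
  have h := key (List.finRange ℓ)
  have hs : ((List.finRange ℓ).map fun i => (d i : K) * (if j = k then (1 : K) else 0)).sum
      = if j = k then ∑ i, (d i : K) else 0 := by
    rw [← List.ofFn_eq_map, List.sum_ofFn]
    split_ifs <;> simp
  rw [hs] at h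
  exact h

theorem pdj_comm (d d' : Fin ℓ → ℕ) (j k : Fin n) :
    Commute (pdj (K := K) d j) (pdj d' k) := by
  unfold pdj
  apply Commute.list_prod_left
  intro x hx
  apply Commute.list_prod_right
  intro y hy
  obtain ⟨i, -, rfl⟩ := List.mem_map.1 hx
  obtain ⟨i', -, rfl⟩ := List.mem_map.1 hy
  exact (pEnd_comm (K := K) (i, j) (i', k)).pow_pow _ _

theorem pdj_add (d d' : Fin ℓ → ℕ) (j : Fin n) :
    pdj (K := K) (d + d') j = pdj d j * pdj d' j := by
  have key : ∀ l : List (Fin ℓ),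
      (l.map fun i => pEnd (K := K) (i, j) ^ (d + d') i).prod
      = (l.map fun i => pEnd (K := K) (i, j) ^ d i).prod
        * (l.map fun i => pEnd (K := K) (i, j) ^ d' i).prod := by
    intro l
    induction l with
    | nil => simp
    | cons i l ih =>
      simp only [List.map_cons, List.prod_cons]
      rw [ih, Pi.add_apply, pow_add]
      have hc : Commute (pEnd (K := K) (i, j) ^ d' i)
          (l.map fun i => pEnd (K := K) (i, j) ^ d i).prod := by
        apply Commute.list_prod_right
        intro y hy
        obtain ⟨i', -, rfl⟩ := List.mem_map.1 hy
        exact (pEnd_comm (K := K) (i, j) (i', j)).pow_pow _ _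
      simp only [mul_assoc]
      rw [← mul_assoc (pEnd (K := K) (i, j) ^ d' i), hc.eq, mul_assoc]
  exact key _

theorem term_mul (q : K) (d d' : Fin ℓ → ℕ) (j k : Fin n) :
    ((1 + q • eulerEnd j) * pdj (K := K) d j) * ((1 + q • eulerEnd k) * pdj d' k)
      = (1 + q • eulerEnd j) * (1 + q • eulerEnd k) * (pdj d j * pdj d' k)
        + (q * (if j = k then ∑ i, (d i : K) else 0)) •
          ((1 + q • eulerEnd j) * (pdj d j * pdj d' k)) := by
  have h : pdj (K := K) d j * (1 + q • eulerEnd k) = (1 + q • eulerEnd k) * pdj d j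
      + (q * (if j = k then ∑ i, (d i : K) else 0)) • pdj d j := by
    rw [mul_add, mul_smul_comm, pdj_euler, add_mul, mul_one, one_mul, smul_mul_assoc, smul_add,
      smul_smul, add_assoc]
  generalize (1 + q • eulerEnd j : Module.End K (MvPolynomial (Fin ℓ × Fin n) K)) = A at h ⊢
  generalize (1 + q • eulerEnd k : Module.End K (MvPolynomial (Fin ℓ × Fin n) K)) = B at h ⊢
  rw [mul_assoc, ← mul_assoc (pdj d j), h, add_mul, mul_add, smul_mul_assoc, mul_smul_comm,
    mul_assoc, mul_assoc]

theorem term_comm (q : K) (d d' : Fin ℓ → ℕ) (j k : Fin n) :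
    ((1 + q • eulerEnd j) * pdj (K := K) d j) * ((1 + q • eulerEnd k) * pdj d' k)
      - ((1 + q • eulerEnd k) * pdj (K := K) d' k) * ((1 + q • eulerEnd j) * pdj d j)
      = if j = k then (q * ((∑ i, (d i : K)) - ∑ i, (d' i : K))) •
          ((1 + q • eulerEnd j) * pdj (d + d') j) else 0 := by
  have hE : Commute (1 + q • eulerEnd (K := K) (ℓ := ℓ) j) (1 + q • eulerEnd k) :=
    (Commute.one_left _).add_left
      ((Commute.one_right _).add_right (((euler_comm j k).smul_left q).smul_right q))
  rw [term_mul, term_mul, (pdj_comm d' d k j).eq, hE.eq]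
  by_cases h : j = k
  · subst h
    simp only [if_true, pdj_add]
    rw [add_sub_add_left_eq_sub, mul_sub]
    exact (sub_smul _ _ _).symm
  · have h' : ¬ k = j := fun e => h e.symm
    simp [h, h']

end Helpers

/-- The commutator relation
`[D_{q,d}, D_{q,d'}] = q (|d| - |d'|) D_{q, d+d'}`. -/
theorem deformed_operators_commutator {K : Type*} [Field K] [CharZero K] {ℓ n : ℕ}
    (hℓ : 1 ≤ ℓ) (hn : 1 ≤ n) (q : K) (d d' : Fin ℓ → ℕ) :
    Dq ℓ n q d * Dq ℓ n q d' - Dq ℓ n q d' * Dq ℓ n q d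
      = (q * ((∑ i, (d i : K)) - ∑ i, (d' i : K))) • Dq ℓ n q (d + d') := by
  have hD : ∀ e : Fin ℓ → ℕ, Dq ℓ n q e = ∑ j : Fin n, (1 + q • eulerEnd j) * pdj e j :=
    fun _ => rfl
  rw [hD, hD, hD, Finset.sum_mul_sum, Finset.sum_mul_sum,
    Finset.sum_comm (f := fun i j => ((1 + q • eulerEnd i) * pdj (K := K) d' i) *
      ((1 + q • eulerEnd j) * pdj d j)), ← Finset.sum_sub_distrib, Finset.smul_sum]
  refine Finset.sum_congr rfl fun j _ => ?_
  rw [← Finset.sum_sub_distrib]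
  simp only [term_comm]
  simp
end

section
/- Let m ≥ 1 be an integer, σ a permutation of {1,…,n}, and ζ_1,…,ζ_n ∈ K scalars with ζ_j^m = 1 for all j. Let w : K[X] → K[X] be the K-algebra automorphism determined by x_{ij} ↦ ζ_j·x_{i,σ(j)} for all i, j (the diagonal action of an element of the generalized symmetric group G(m,n)). If f ∈ K[X] is diagonally (G(m,n),q)-harmonic, then so is w(f). -/
open MvPolynomial

section Helpers
variable {K : Type*} [Field K] {ℓ n : ℕ}

/-- The diagonal action. -/
noncomputable def wact (ℓ : ℕ) (σ : Equiv.Perm (Fin n)) (ζ : Fin n → K) :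
    MvPolynomial (Fin ℓ × Fin n) K →ₐ[K] MvPolynomial (Fin ℓ × Fin n) K :=
  aeval (fun v : Fin ℓ × Fin n => C (ζ v.2) * X (v.1, σ v.2))

lemma wact_X (σ : Equiv.Perm (Fin n)) (ζ : Fin n → K) (v : Fin ℓ × Fin n) :
    wact ℓ σ ζ (X v) = C (ζ v.2) * X (v.1, σ v.2) := by
  simp [wact]

lemma pderiv_wact (σ : Equiv.Perm (Fin n)) (ζ : Fin n → K) (i : Fin ℓ) (j : Fin n)
    (p : MvPolynomial (Fin ℓ × Fin n) K) :
    pderiv (i, σ j) (wact ℓ σ ζ p) = ζ j • wact ℓ σ ζ (pderiv (i, j) p) := by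
  induction p using MvPolynomial.induction_on with
  | C a =>
    have : wact ℓ σ ζ (C a) = C a := by simp [wact, algebraMap_eq]
    simp [this]
  | add p r hp hr => simp [hp, hr]
  | mul_X p v hp =>
    obtain ⟨a, b⟩ := v
    have key : pderiv (i, σ j) (wact ℓ σ ζ (X (a, b)))
        = ζ j • wact ℓ σ ζ (pderiv (i, j) (X (a, b))) := by
      rw [wact_X]
      by_cases h : (a, b) = (i, j)
      · obtain ⟨rfl, rfl⟩ := Prod.mk.inj h
        simp [smul_eq_C_mul]
      · have h' : (a, σ b) ≠ (i, σ j) := by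
          intro h2
          obtain ⟨h3, h4⟩ := Prod.mk.inj h2
          exact h (by rw [h3, σ.injective h4])
        simp [pderiv_X_of_ne h, pderiv_X_of_ne h']
    rw [map_mul, Derivation.leibniz, Derivation.leibniz, hp, key]
    simp only [smul_eq_mul, map_add, map_mul, smul_add, mul_smul_comm]

lemma pderiv_pow_wact (σ : Equiv.Perm (Fin n)) (ζ : Fin n → K) (i : Fin ℓ) (j : Fin n) (e : ℕ)
    (p : MvPolynomial (Fin ℓ × Fin n) K) :
    (((pderiv (i, σ j)).toLinearMap : Module.End K (MvPolynomial (Fin ℓ × Fin n) K)) ^ e)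
      (wact ℓ σ ζ p) = ζ j ^ e • wact ℓ σ ζ
        ((((pderiv (i, j)).toLinearMap : Module.End K (MvPolynomial (Fin ℓ × Fin n) K)) ^ e) p) := by
  induction e with
  | zero => simp
  | succ e ih =>
    simp only [pow_succ', Module.End.mul_apply]
    rw [ih, map_smul]
    simp only [Derivation.coeFn_coe]
    rw [pderiv_wact, smul_smul, mul_comm]

lemma pdj_wact (σ : Equiv.Perm (Fin n)) (ζ : Fin n → K) (d : Fin ℓ → ℕ) (j : Fin n)
    (p : MvPolynomial (Fin ℓ × Fin n) K) :
    pdj d (σ j) (wact ℓ σ ζ p) = ζ j ^ (∑ i, d i) • wact ℓ σ ζ (pdj d j p) := by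
  have hs : ∑ i, d i = ((List.finRange ℓ).map d).sum := by
    rw [← List.ofFn_eq_map, List.sum_ofFn]
  rw [hs]
  unfold pdj
  induction List.finRange ℓ with
  | nil => simp
  | cons a l ih =>
    simp only [List.map_cons, List.prod_cons, List.sum_cons, Module.End.mul_apply]
    rw [ih, map_smul, pderiv_pow_wact, smul_smul, pow_add, mul_comm]

lemma Dq_wact (q : K) (σ : Equiv.Perm (Fin n)) (ζ : Fin n → K) (d : Fin ℓ → ℕ)
    (h : ∀ j, ζ j ^ (∑ i, d i) = 1) (p : MvPolynomial (Fin ℓ × Fin n) K) :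
    Dq ℓ n q d (wact ℓ σ ζ p) = wact ℓ σ ζ (Dq ℓ n q d p) := by
  unfold Dq
  conv_lhs => rw [← Equiv.sum_comp σ]
  simp only [LinearMap.sum_apply, map_sum]
  refine Finset.sum_congr rfl fun j _ => ?_
  rw [Module.End.mul_apply, Module.End.mul_apply, pdj_wact, h, one_smul]
  simp only [LinearMap.add_apply, Module.End.one_apply, LinearMap.smul_apply,
    LinearMap.sum_apply, Module.End.mul_apply, LinearMap.mulLeft_apply,
    Derivation.coeFn_coe, map_add, map_smul, map_sum, map_mul,
    pderiv_wact, wact_X]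
  congr 2
  refine Finset.sum_congr rfl fun i _ => ?_
  rw [smul_eq_C_mul]
  ring

end Helpers

/-- The diagonal action of an element of `G(m,n)` preserves the space of diagonally
`(G(m,n),q)`-harmonic polynomials. -/
theorem qHarmonic_stable_under_action {K : Type*} [Field K] [CharZero K] {ℓ n : ℕ}
    (hℓ : 1 ≤ ℓ) (hn : 1 ≤ n) (q : K) (m : ℕ) (hm : 1 ≤ m)
    (σ : Equiv.Perm (Fin n)) (ζ : Fin n → K) (hζ : ∀ j, ζ j ^ m = 1)
    (f : MvPolynomial (Fin ℓ × Fin n) K)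
    (hf : ∀ d : Fin ℓ → ℕ, (∃ k : ℕ, 0 < k ∧ ∑ i, d i = m * k) → Dq ℓ n q d f = 0) :
    ∀ d : Fin ℓ → ℕ, (∃ k : ℕ, 0 < k ∧ ∑ i, d i = m * k) →
      Dq ℓ n q d
        (aeval (fun v : Fin ℓ × Fin n => C (ζ v.2) * X (v.1, σ v.2)) f) = 0 := by
  rintro d ⟨k, hk, hd⟩
  have := Dq_wact q σ ζ d (fun j => by rw [hd, pow_mul, hζ, one_pow]) f
  rw [hf d ⟨k, hk, hd⟩, map_zero] at this
  exact this
end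

section
/- Let K₀ be a field of characteristic zero, K = K₀(q) the field of rational functions in an indeterminate q, and m ≥ 1 an integer. For every multidegree a ∈ ℕ^ℓ, the dimension over K of the space of polynomials in K[X] that are multihomogeneous of multidegree a (total degree a_i in the i-th set of variables, for each i) and diagonally (G(m,n),q)-harmonic is at most the dimension over K₀ of the space of polynomials in K₀[X] that are multihomogeneous of multidegree a and satisfy Σ_{j=1}^n ∂_j^d f = 0 for every d ∈ ℕ^ℓ with |d| a positive multiple of m (the classical diagonally G(m,n)-harmonic polynomials). -/
open MvPolynomial

/-- The undeformed operator `D_d = ∑_j ∂_j^d`. -/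
noncomputable def D0 {K : Type*} [Field K] (ℓ n : ℕ) (d : Fin ℓ → ℕ) :
    Module.End K (MvPolynomial (Fin ℓ × Fin n) K) :=
  ∑ j : Fin n, pdj d j

/-- The submodule of polynomials that are multihomogeneous of multidegree `a`
(total degree `a i` in the `i`-th set of variables) and diagonally `(G(m,n),q)`-harmonic. -/
noncomputable def qHarmonicHomogeneous {K : Type*} [Field K] (ℓ n : ℕ) (q : K) (m : ℕ)
    (a : Fin ℓ → ℕ) : Submodule K (MvPolynomial (Fin ℓ × Fin n) K) :=
  weightedHomogeneousSubmodule K (fun v : Fin ℓ × Fin n => Pi.single v.1 1) a ⊓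
    ⨅ d ∈ {d : Fin ℓ → ℕ | ∃ k : ℕ, 0 < k ∧ ∑ i, d i = m * k}, LinearMap.ker (Dq ℓ n q d)

/-- The submodule of polynomials that are multihomogeneous of multidegree `a`
and classically diagonally `G(m,n)`-harmonic. -/
noncomputable def classicalHarmonicHomogeneous {K : Type*} [Field K] (ℓ n : ℕ) (m : ℕ)
    (a : Fin ℓ → ℕ) : Submodule K (MvPolynomial (Fin ℓ × Fin n) K) :=
  weightedHomogeneousSubmodule K (fun v : Fin ℓ × Fin n => Pi.single v.1 1) a ⊓
    ⨅ d ∈ {d : Fin ℓ → ℕ | ∃ k : ℕ, 0 < k ∧ ∑ i, d i = m * k}, LinearMap.ker (D0 ℓ n d)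

/-- `pdj` over a general commutative ring. -/
noncomputable def pdjR {R : Type*} [CommRing R] {ℓ n : ℕ} (d : Fin ℓ → ℕ) (j : Fin n) :
    Module.End R (MvPolynomial (Fin ℓ × Fin n) R) :=
  ((List.finRange ℓ).map fun i =>
    ((pderiv (i, j)).toLinearMap : Module.End R (MvPolynomial (Fin ℓ × Fin n) R)) ^ d i).prod

/-- `Dq` over a general commutative ring. -/
noncomputable def DqR {R : Type*} [CommRing R] (ℓ n : ℕ) (q : R) (d : Fin ℓ → ℕ) :
    Module.End R (MvPolynomial (Fin ℓ × Fin n) R) :=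
  ∑ j : Fin n,
    (1 + q • ∑ i : Fin ℓ,
        (LinearMap.mulLeft R (X (i, j)) * (pderiv (i, j)).toLinearMap)) * pdjR d j

theorem pdjR_map {R S : Type*} [CommRing R] [CommRing S] (φ : R →+* S) {ℓ n : ℕ}
    (d : Fin ℓ → ℕ) (j : Fin n) (f : MvPolynomial (Fin ℓ × Fin n) R) :
    pdjR d j (map φ f) = map φ (pdjR d j f) := by
  have hpow : ∀ (i : Fin ℓ) (k : ℕ) (g : MvPolynomial (Fin ℓ × Fin n) R),
      (((pderiv (i, j)).toLinearMap : Module.End S (MvPolynomial (Fin ℓ × Fin n) S)) ^ k)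
        (map φ g) =
      map φ ((((pderiv (i, j)).toLinearMap :
        Module.End R (MvPolynomial (Fin ℓ × Fin n) R)) ^ k) g) := by
    intro i k
    induction k with
    | zero => intro g; simp
    | succ k ih =>
      intro g
      rw [pow_succ, pow_succ, Module.End.mul_apply, Module.End.mul_apply, ← ih]
      congr 1
      exact pderiv_map
  unfold pdjR
  generalize List.finRange ℓ = L
  induction L with
  | nil => simp
  | cons i L ih =>
    simp only [List.map_cons, List.prod_cons, Module.End.mul_apply]
    rw [ih, hpow]

theorem DqR_map {R S : Type*} [CommRing R] [CommRing S] (φ : R →+* S) {ℓ n : ℕ} (q : R)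
    (d : Fin ℓ → ℕ) (f : MvPolynomial (Fin ℓ × Fin n) R) :
    DqR ℓ n (φ q) d (map φ f) = map φ (DqR ℓ n q d f) := by
  unfold DqR
  simp only [LinearMap.sum_apply, Module.End.mul_apply, pdjR_map, LinearMap.add_apply,
    LinearMap.smul_apply, map_sum, map_add, Module.End.one_apply, LinearMap.mulLeft_apply,
    Derivation.coeFn_coe, pderiv_map, smul_eq_C_mul, map_mul,
    map_X, map_C]

/-- Harmonics over a general commutative ring. -/
noncomputable def harmR {R : Type*} [CommRing R] (ℓ n : ℕ) (q : R) (m : ℕ)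
    (a : Fin ℓ → ℕ) : Submodule R (MvPolynomial (Fin ℓ × Fin n) R) :=
  weightedHomogeneousSubmodule R (fun v : Fin ℓ × Fin n => Pi.single v.1 1) a ⊓
    ⨅ d ∈ {d : Fin ℓ → ℕ | ∃ k : ℕ, 0 < k ∧ ∑ i, d i = m * k}, LinearMap.ker (DqR ℓ n q d)

theorem mem_harmR {R : Type*} [CommRing R] {ℓ n : ℕ} {q : R} {m : ℕ}
    {a : Fin ℓ → ℕ} {f : MvPolynomial (Fin ℓ × Fin n) R} :
    f ∈ harmR ℓ n q m a ↔
      (∀ e, coeff e f ≠ 0 → Finsupp.weight (fun v : Fin ℓ × Fin n =>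
        (Pi.single v.1 1 : Fin ℓ → ℕ)) e = a) ∧
      ∀ d : Fin ℓ → ℕ, (∃ k : ℕ, 0 < k ∧ ∑ i, d i = m * k) → DqR ℓ n q d f = 0 := by
  simp only [harmR, Submodule.mem_inf, mem_weightedHomogeneousSubmodule, IsWeightedHomogeneous,
    Submodule.mem_iInf, Set.mem_ofPred_eq, LinearMap.mem_ker]

theorem harmR_map {R S : Type*} [CommRing R] [CommRing S] (φ : R →+* S) {ℓ n : ℕ} {q : R}
    {m : ℕ} {a : Fin ℓ → ℕ} {f : MvPolynomial (Fin ℓ × Fin n) R} (hf : f ∈ harmR ℓ n q m a) :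
    map φ f ∈ harmR ℓ n (φ q) m a := by
  rw [mem_harmR] at hf ⊢
  refine ⟨fun e he => hf.1 e fun h => he ?_, fun d hd => ?_⟩
  · rw [coeff_map, h, map_zero]
  · rw [DqR_map, hf.2 d hd, map_zero]

theorem harmR_of_map {R S : Type*} [CommRing R] [CommRing S] (φ : R →+* S)
    (hφ : Function.Injective φ) {ℓ n : ℕ} {q : R}
    {m : ℕ} {a : Fin ℓ → ℕ} {f : MvPolynomial (Fin ℓ × Fin n) R}
    (hf : map φ f ∈ harmR ℓ n (φ q) m a) : f ∈ harmR ℓ n q m a := by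
  rw [mem_harmR] at hf ⊢
  refine ⟨fun e he => hf.1 e fun h => he ?_, fun d hd => ?_⟩
  · rw [coeff_map] at h
    exact hφ (by rw [h, map_zero])
  · apply map_injective φ hφ
    rw [← DqR_map, hf.2 d hd, map_zero]

theorem harmR_sat {R : Type*} [CommRing R] [IsDomain R] {ℓ n : ℕ} {q : R}
    {m : ℕ} {a : Fin ℓ → ℕ} {p : R} (hp : p ≠ 0) {f : MvPolynomial (Fin ℓ × Fin n) R}
    (hf : p • f ∈ harmR ℓ n q m a) : f ∈ harmR ℓ n q m a := by
  rw [mem_harmR] at hf ⊢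
  refine ⟨fun e he => hf.1 e ?_, fun d hd => ?_⟩
  · rw [coeff_smul]
    exact mul_ne_zero hp he
  · have := hf.2 d hd
    rw [map_smul, smul_eq_C_mul] at this
    exact (mul_eq_zero.mp this).resolve_left (by simpa using hp)

theorem harmR_le {R : Type*} [CommRing R] {ℓ n : ℕ} {q : R}
    {m : ℕ} {a : Fin ℓ → ℕ} :
    harmR (R := R) ℓ n q m a ≤ weightedHomogeneousSubmodule R (fun _ => (1 : ℕ)) (∑ i, a i) := by
  intro f hf
  rw [mem_harmR] at hf
  rw [mem_weightedHomogeneousSubmodule]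
  intro e he
  rw [← hf.1 e he]
  simp only [Finsupp.weight_apply, Finsupp.sum, Finset.sum_apply, Pi.smul_apply]
  rw [Finset.sum_comm]
  refine Finset.sum_congr rfl fun v _ => ?_
  simp [Pi.single_apply]

theorem classical_eq {K : Type*} [Field K] (ℓ n m : ℕ) (a : Fin ℓ → ℕ) :
    classicalHarmonicHomogeneous (K := K) ℓ n m a = harmR ℓ n 0 m a := by
  have h : ∀ d, D0 (K := K) ℓ n d = DqR ℓ n 0 d := by
    intro d
    simp only [D0, DqR, zero_smul, add_zero, one_mul]
    rfl
  simp only [classicalHarmonicHomogeneous, harmR, h]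

theorem qHarm_eq {K : Type*} [Field K] (ℓ n m : ℕ) (q : K) (a : Fin ℓ → ℕ) :
    qHarmonicHomogeneous (K := K) ℓ n q m a = harmR ℓ n q m a := rfl

theorem clear_denoms {σ K₀ : Type*} [Field K₀] (v : MvPolynomial σ (RatFunc K₀)) :
    ∃ p : Polynomial K₀, p ≠ 0 ∧ ∃ f : MvPolynomial σ (Polynomial K₀),
      map (algebraMap (Polynomial K₀) (RatFunc K₀)) f =
        algebraMap (Polynomial K₀) (RatFunc K₀) p • v := by
  induction v using MvPolynomial.induction_on with
  | C x =>
    refine ⟨x.denom, x.denom_ne_zero, C x.num, ?_⟩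
    rw [map_C, smul_eq_C_mul, ← C_mul]
    congr 1
    have hne := RatFunc.algebraMap_ne_zero x.denom_ne_zero
    have h := RatFunc.num_div_denom x
    rw [div_eq_iff hne] at h
    rw [h, mul_comm]
  | add v w hv hw =>
    obtain ⟨p, hp, f, hf⟩ := hv
    obtain ⟨r, hr, g, hg⟩ := hw
    refine ⟨p * r, mul_ne_zero hp hr, C r * f + C p * g, ?_⟩
    simp only [map_add, map_mul, hf, hg, smul_eq_C_mul, map_C]
    ring
  | mul_X v i hv =>
    obtain ⟨p, hp, f, hf⟩ := hv
    refine ⟨p, hp, f * X i, ?_⟩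
    rw [map_mul, hf, map_X, smul_mul_assoc]

/-- Specialization bound: over `K = K₀(q)` with `q` the indeterminate, the dimension of the
multihomogeneous component of multidegree `a` of the diagonally `(G(m,n),q)`-harmonic
polynomials is at most the dimension of the corresponding component of the classical
diagonally `G(m,n)`-harmonic polynomials over `K₀`. -/
theorem qHarmonic_dimension_le {K₀ : Type*} [Field K₀] [CharZero K₀] {ℓ n : ℕ}
    (hℓ : 1 ≤ ℓ) (hn : 1 ≤ n) (m : ℕ) (hm : 1 ≤ m) (a : Fin ℓ → ℕ) :
    Module.rank (RatFunc K₀)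
        (qHarmonicHomogeneous (K := RatFunc K₀) ℓ n RatFunc.X m a)
      ≤ Module.rank K₀ (classicalHarmonicHomogeneous (K := K₀) ℓ n m a) := by
  rw [qHarm_eq, classical_eq]
  set q : Polynomial K₀ := Polynomial.X with hq
  set φ := algebraMap (Polynomial K₀) (RatFunc K₀) with hφ
  have hφi : Function.Injective φ := RatFunc.algebraMap_injective K₀
  have hφq : φ q = RatFunc.X := RatFunc.algebraMap_X
  let ev : Polynomial K₀ →+* K₀ := Polynomial.evalRingHom 0
  have hev : ev q = 0 := by simp [ev, hq]
  let L := harmR (R := Polynomial K₀) ℓ n q m a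
  have hfin : Module.Finite (Polynomial K₀) L := by
    have h1 : Module.Finite (Polynomial K₀) (weightedHomogeneousSubmodule (Polynomial K₀)
        (fun _ : Fin ℓ × Fin n => (1 : ℕ)) (∑ i, a i)) :=
      Module.Finite.iff_fg.mpr (weightedHomogeneousSubmodule_fg _ _ (by simp) _)
    exact Module.Finite.of_injective (Submodule.inclusion harmR_le)
      (Submodule.inclusion_injective _)
  let b := Module.finBasis (Polynomial K₀) L
  set N := Module.finrank (Polynomial K₀) L with hN
  -- upper bound
  have upper : Module.rank (RatFunc K₀)
      (harmR (R := RatFunc K₀) ℓ n RatFunc.X m a) ≤ (N : Cardinal) := by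
    let g : Fin N → MvPolynomial (Fin ℓ × Fin n) (RatFunc K₀) := fun i => map φ (b i).1
    have hle : harmR (R := RatFunc K₀) ℓ n RatFunc.X m a ≤
        Submodule.span (RatFunc K₀) (Set.range g) := by
      intro v hv
      obtain ⟨p, hp, f, hf⟩ := clear_denoms v
      have hp' : φ p ≠ 0 := RatFunc.algebraMap_ne_zero hp
      have hfL : f ∈ L := by
        refine harmR_of_map φ hφi ?_
        rw [hf, hφq]
        exact Submodule.smul_mem _ _ hv
      have hsum := congrArg (fun x : L => map φ x.1) (b.sum_repr ⟨f, hfL⟩)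
      simp only [AddSubmonoidClass.coe_finsetSum, Submodule.coe_smul, map_sum, smul_eq_C_mul,
        map_mul, map_C] at hsum
      rw [hf] at hsum
      have hv2 : v = (φ p)⁻¹ • (φ p • v) := by rw [inv_smul_smul₀ hp']
      rw [hv2]
      refine Submodule.smul_mem _ _ ?_
      rw [← hsum]
      refine Submodule.sum_mem _ fun i _ => ?_
      rw [← smul_eq_C_mul]
      exact Submodule.smul_mem _ _ (Submodule.subset_span ⟨i, rfl⟩)
    calc _ ≤ Module.rank (RatFunc K₀) (Submodule.span (RatFunc K₀) (Set.range g)) :=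
          Submodule.rank_mono hle
      _ ≤ Cardinal.mk (Set.range g) := rank_span_le _
      _ ≤ (N : Cardinal) := by
          have := Cardinal.mk_range_le_lift (f := g)
          simpa using this
  refine upper.trans ?_
  let h : Fin N → harmR (R := K₀) ℓ n 0 m a := fun i =>
    ⟨map ev (b i).1, by have := harmR_map ev (b i).2; rwa [hev] at this⟩
  have hli : LinearIndependent K₀ h := by
    rw [Fintype.linearIndependent_iff]
    intro c hc
    have hc' := congrArg Subtype.val hc
    simp only [AddSubmonoidClass.coe_finsetSum, Submodule.coe_smul, h, ZeroMemClass.coe_zero,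
      smul_eq_C_mul] at hc'
    let F : L := ∑ i, Polynomial.C (c i) • b i
    have hF : map ev F.1 = 0 := by
      rw [← hc']
      simp [F, smul_eq_C_mul, ev]
    have hdvd : C q ∣ F.1 := by
      rw [C_dvd_iff_dvd_coeff]
      intro e
      rw [hq, Polynomial.X_dvd_iff, Polynomial.coeff_zero_eq_eval_zero]
      have := congrArg (coeff e) hF
      rw [coeff_map, coeff_zero] at this
      exact this
    obtain ⟨G, hG⟩ := hdvd
    have hGL : G ∈ L := by
      refine harmR_sat (p := q) Polynomial.X_ne_zero ?_
      rw [smul_eq_C_mul, ← hG]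
      exact F.2
    have hFG : F = q • (⟨G, hGL⟩ : L) := by
      apply Subtype.ext
      rw [Submodule.coe_smul, smul_eq_C_mul]
      exact hG
    intro i
    have h1 := congrArg (fun x => b.repr x i) hFG
    have h2 : b.repr F i = Polynomial.C (c i) := by
      simp only [F]
      rw [b.repr_sum_self]
    simp only [h2, map_smul, Finsupp.smul_apply, smul_eq_mul] at h1
    have h3 := congrArg (Polynomial.eval 0) h1
    simpa [hq] using h3
  have := hli.cardinal_lift_le_rank
  simpa using this
end

section
/- Let ε := ∂_{x_1}∂_{x_2}⋯∂_{x_n} be the product of all partial derivative operators on K[x_1,…,x_n]. Then for every k ∈ ℕ and every f ∈ K[x_1,…,x_n], ε(D_{q,k} f) = Σ_{j=1}^n ((1+q) + q·x_j∂_{x_j}) ∂_{x_j}^k (ε f). Equivalently, ε ∘ D_{q,k} = (1+q)·D_{q/(1+q),k} ∘ ε whenever q ≠ −1. -/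
open MvPolynomial

/-- The deformed operator `D_{q,k} = ∑_j (1 + q x_j ∂_j) ∘ ∂_j^k` on `K[x_1,…,x_n]`. -/
noncomputable def Dq1 {K : Type*} [Field K] (n : ℕ) (q : K) (k : ℕ) :
    Module.End K (MvPolynomial (Fin n) K) :=
  ∑ j : Fin n,
    (1 + q • (LinearMap.mulLeft K (X j) * (pderiv j).toLinearMap)) *
      ((pderiv j).toLinearMap : Module.End K (MvPolynomial (Fin n) K)) ^ k

/-- The operator `ε = ∂_1 ∂_2 ⋯ ∂_n`. -/
noncomputable def epsOp {K : Type*} [Field K] (n : ℕ) :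
    Module.End K (MvPolynomial (Fin n) K) :=
  ((List.finRange n).map fun j =>
    ((pderiv j).toLinearMap : Module.End K (MvPolynomial (Fin n) K))).prod

theorem aux_pderiv_comm {K : Type*} [Field K] {n : ℕ} (i j : Fin n)
    (f : MvPolynomial (Fin n) K) : pderiv i (pderiv j f) = pderiv j (pderiv i f) := by
  have h : ⁅(pderiv i : Derivation K (MvPolynomial (Fin n) K) (MvPolynomial (Fin n) K)),
      (pderiv j : Derivation K (MvPolynomial (Fin n) K) (MvPolynomial (Fin n) K))⁆ = 0 := by
    apply MvPolynomial.derivation_ext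
    intro a
    rw [Derivation.commutator_apply]
    simp only [pderiv_X, Pi.single_apply]
    split_ifs <;> simp
  have := congrArg (fun D => D f) h
  simp only [Derivation.commutator_apply] at this
  exact sub_eq_zero.mp this

theorem aux_list {K : Type*} [Field K] {n : ℕ} (j : Fin n) (l : List (Fin n))
    (h : MvPolynomial (Fin n) K) :
    (l.map fun j => ((pderiv j).toLinearMap : Module.End K (MvPolynomial (Fin n) K))).prod
        (X j * pderiv j h)
      = X j * pderiv j ((l.map fun j =>
          ((pderiv j).toLinearMap : Module.End K (MvPolynomial (Fin n) K))).prod h)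
        + (l.count j) • ((l.map fun j =>
          ((pderiv j).toLinearMap : Module.End K (MvPolynomial (Fin n) K))).prod h) := by
  induction l with
  | nil => simp
  | cons i l ih =>
    simp only [List.map_cons, List.prod_cons, Module.End.mul_apply, ih]
    generalize (l.map fun j =>
          ((pderiv j).toLinearMap : Module.End K (MvPolynomial (Fin n) K))).prod h = g
    simp only [Derivation.coeFn_coe, map_add, map_nsmul, pderiv_mul, List.count_cons,
      aux_pderiv_comm i j g]
    by_cases hij : i = j
    · subst hij
      simp [add_smul]
      ring
    · rw [pderiv_X_of_ne (Ne.symm hij)]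
      simp [hij]

theorem aux_eps_X {K : Type*} [Field K] {n : ℕ} (j : Fin n) (h : MvPolynomial (Fin n) K) :
    epsOp n (X j * pderiv j h) = X j * pderiv j (epsOp n h) + epsOp n h := by
  unfold epsOp
  rw [aux_list, List.count_eq_one_of_mem (List.nodup_finRange n) (List.mem_finRange j), one_smul]

theorem aux_eps_comm {K : Type*} [Field K] {n : ℕ} (j : Fin n) :
    Commute (epsOp n) ((pderiv j).toLinearMap : Module.End K (MvPolynomial (Fin n) K)) := by
  unfold epsOp
  apply Commute.list_prod_left
  intro x hx
  obtain ⟨i, -, rfl⟩ := List.mem_map.mp hx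
  exact LinearMap.ext fun f => aux_pderiv_comm i j f

/-- Commutation of `ε` with the deformed operators:
`ε ∘ D_{q,k} = ∑_j ((1+q) + q x_j∂_j) ∂_j^k ∘ ε`, i.e.
`ε ∘ D_{q,k} = (1+q) D_{q/(1+q),k} ∘ ε` when `q ≠ -1`. -/
theorem eps_comm_Dq {K : Type*} [Field K] [CharZero K] {n : ℕ} (hn : 1 ≤ n) (q : K) :
    (∀ (k : ℕ) (f : MvPolynomial (Fin n) K),
      epsOp n (Dq1 n q k f)
        = ∑ j : Fin n,
            ((1 + q) • ((((pderiv j).toLinearMap :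
                  Module.End K (MvPolynomial (Fin n) K)) ^ k) (epsOp n f))
              + q • (X j * pderiv j ((((pderiv j).toLinearMap :
                  Module.End K (MvPolynomial (Fin n) K)) ^ k) (epsOp n f)))))
    ∧ (q ≠ -1 → ∀ k : ℕ,
        epsOp n * Dq1 n q k = (1 + q) • (Dq1 n (q / (1 + q)) k * epsOp n)) := by
  have key : ∀ (k : ℕ) (f : MvPolynomial (Fin n) K),
      epsOp n (Dq1 n q k f)
        = ∑ j : Fin n,
            ((1 + q) • ((((pderiv j).toLinearMap :
                  Module.End K (MvPolynomial (Fin n) K)) ^ k) (epsOp n f))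
              + q • (X j * pderiv j ((((pderiv j).toLinearMap :
                  Module.End K (MvPolynomial (Fin n) K)) ^ k) (epsOp n f)))) := by
    intro k f
    simp only [Dq1, LinearMap.sum_apply, map_sum]
    refine Finset.sum_congr rfl fun j _ => ?_
    have hc := LinearMap.congr_fun ((aux_eps_comm (K := K) j).pow_right k).eq f
    simp only [Module.End.mul_apply] at hc
    simp only [Module.End.mul_apply, LinearMap.add_apply, Module.End.one_apply,
      LinearMap.smul_apply, LinearMap.mulLeft_apply, Derivation.coeFn_coe, map_add, map_smul,
      aux_eps_X, ← hc]
    module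
  refine ⟨key, fun hq k => LinearMap.ext fun f => ?_⟩
  have hq' : 1 + q ≠ 0 := fun h => hq (by linear_combination h)
  rw [Module.End.mul_apply, key]
  simp only [Dq1, LinearMap.smul_apply, Module.End.mul_apply, LinearMap.sum_apply,
    Finset.smul_sum, LinearMap.add_apply, Module.End.one_apply, LinearMap.mulLeft_apply,
    Derivation.coeFn_coe, smul_add, smul_smul, mul_div_cancel₀ _ hq']
end

section
/- Let r ≥ 1 be an integer and let φ̄_r : K[x_1,…,x_n] → K[x_1,…,x_n] be the linear map sending each monomial x^a = x_1^{a_1}⋯x_n^{a_n} (a ∈ ℕ^n) to (a_1!⋯a_n!/((ra_1)!⋯(ra_n)!))·x^{ra}, i.e., sending the divided-power monomial x^{(a)} := x^a/(a_1!⋯a_n!) to x^{(ra)}. Then for every k ∈ ℕ and every f ∈ K[x_1,…,x_n], Σ_{j=1}^n (r + q·x_j∂_{x_j}) ∂_{x_j}^{rk} (φ̄_r f) = r·φ̄_r(D_{q,k} f). Equivalently, D_{q/r, rk} ∘ φ̄_r = φ̄_r ∘ D_{q,k}. -/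
open MvPolynomial

theorem aux_pderiv_pow {K : Type*} [Field K] {n : ℕ} (j : Fin n) (m : ℕ) (a : Fin n →₀ ℕ) (c : K) :
    (((pderiv j).toLinearMap : Module.End K (MvPolynomial (Fin n) K)) ^ m) (monomial a c)
      = monomial (a - Finsupp.single j m) (c * ((a j).descFactorial m : K)) := by
  induction m with
  | zero => simp
  | succ m ih =>
    rw [pow_succ', Module.End.mul_apply, ih]
    change pderiv j _ = _
    rw [pderiv_monomial, tsub_tsub, ← Finsupp.single_add, Nat.descFactorial_succ]
    congr 1
    simp
    ring

theorem aux_prod {n : ℕ} (g : ℕ → ℕ) (j : Fin n) (b : Fin n →₀ ℕ) (d : ℕ)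
    (h : g (b j + 1) = g (b j) * d) :
    ∏ i, g ((b + Finsupp.single j 1 : Fin n →₀ ℕ) i) = (∏ i, g (b i)) * d := by
  rw [← Finset.mul_prod_erase _ _ (Finset.mem_univ j),
    ← Finset.mul_prod_erase _ (fun i => g (b i)) (Finset.mem_univ j)]
  have : ∏ i ∈ Finset.univ.erase j, g ((b + Finsupp.single j 1 : Fin n →₀ ℕ) i)
      = ∏ i ∈ Finset.univ.erase j, g (b i) := by
    refine Finset.prod_congr rfl fun i hi => ?_
    have := Finset.ne_of_mem_erase hi
    simp [Finsupp.single_apply, this.symm]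
  rw [this]
  simp [h]
  ring

theorem aux_one {K : Type*} [Field K] [CharZero K] {n : ℕ}
    (r : ℕ) (hr : 1 ≤ r)
    (φ : MvPolynomial (Fin n) K →ₗ[K] MvPolynomial (Fin n) K)
    (hφ : ∀ a : Fin n →₀ ℕ,
      φ (monomial a 1)
        = (((∏ j, (a j).factorial : ℕ) : K) / ((∏ j, (r * a j).factorial : ℕ) : K)) •
            monomial (r • a) 1) (j : Fin n) :
    ((pderiv j).toLinearMap : Module.End K (MvPolynomial (Fin n) K)) ^ r * φ
      = φ * (pderiv j).toLinearMap := by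
  refine MvPolynomial.basisMonomials (Fin n) K |>.ext fun a => ?_
  rw [coe_basisMonomials, Module.End.mul_apply, Module.End.mul_apply, hφ, map_smul, aux_pderiv_pow]
  change _ = φ (pderiv j _)
  rw [pderiv_monomial]
  by_cases ha : a j = 0
  · have : (0 : ℕ).descFactorial r = 0 := Nat.descFactorial_eq_zero_iff_lt.2 hr
    simp [ha, this]
  obtain ⟨b, rfl⟩ : ∃ b, a = b + Finsupp.single j 1 :=
    ⟨a - Finsupp.single j 1, (tsub_add_cancel_of_le (by
      rw [Finsupp.single_le_iff]; omega)).symm⟩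
  rw [aux_prod Nat.factorial j b (b j + 1) (by rw [Nat.factorial_succ]; ring),
    aux_prod (fun t => (r * t).factorial) j b ((r * b j + r).descFactorial r) (by
      have := Nat.factorial_mul_descFactorial (n := r * b j + r) (k := r) (by omega)
      rw [Nat.add_sub_cancel] at this
      rw [mul_add, mul_one, this])]
  have e1 : r • (b + Finsupp.single j 1) - Finsupp.single j r = r • b := by
    rw [smul_add, Finsupp.smul_single, smul_eq_mul, mul_one, add_tsub_cancel_right]
  have e2 : (1 : K) * (((b + Finsupp.single j 1 : Fin n →₀ ℕ) j : ℕ) : K) = ((b j + 1 : ℕ) : K) • (1:K) := by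
    simp
  rw [e1, add_tsub_cancel_right, e2, ← smul_monomial, map_smul, hφ]
  have h1 : (((r * b j + r).descFactorial r : ℕ) : K) ≠ 0 := by
    rw [Nat.cast_ne_zero, Ne, Nat.descFactorial_eq_zero_iff_lt]; omega
  have h2 : ((∏ i, (r * b i).factorial : ℕ) : K) ≠ 0 := by
    rw [Nat.cast_ne_zero]
    exact Finset.prod_ne_zero_iff.2 fun i _ => Nat.factorial_ne_zero _
  have e3 : (r • (b + Finsupp.single j 1) : Fin n →₀ ℕ) j = r * b j + r := by simp [mul_add]
  rw [e3, smul_monomial, smul_monomial, smul_monomial]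
  congr 1
  rw [Nat.cast_mul, Nat.cast_mul]
  simp only [smul_eq_mul]
  field_simp

theorem aux_two {K : Type*} [Field K] {n : ℕ} (r : ℕ)
    (φ : MvPolynomial (Fin n) K →ₗ[K] MvPolynomial (Fin n) K)
    (hφ : ∀ a : Fin n →₀ ℕ,
      φ (monomial a 1)
        = (((∏ j, (a j).factorial : ℕ) : K) / ((∏ j, (r * a j).factorial : ℕ) : K)) •
            monomial (r • a) 1) (j : Fin n) (f : MvPolynomial (Fin n) K) :
    X j * pderiv j (φ f) = (r : K) • φ (X j * pderiv j f) := by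
  have : (LinearMap.mulLeft K (X j) * (pderiv j).toLinearMap :
        Module.End K (MvPolynomial (Fin n) K)) * φ
      = (r : K) • (φ * (LinearMap.mulLeft K (X j) * (pderiv j).toLinearMap)) := by
    refine MvPolynomial.basisMonomials (Fin n) K |>.ext fun a => ?_
    rw [coe_basisMonomials]
    change X j * pderiv j (φ _) = (r : K) • φ (X j * pderiv j _)
    rw [X_mul_pderiv_monomial, map_nsmul, hφ, Derivation.map_smul, mul_smul_comm,
      X_mul_pderiv_monomial]
    simp only [← Nat.cast_smul_eq_nsmul K, smul_smul]
    congr 1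
    simp
    ring
  exact LinearMap.congr_fun this f

/-- The inflation `φ̄_r` (sending the divided-power monomial `x^{(a)}` to `x^{(ra)}`)
intertwines `D_{q,k}` and `D_{q/r, rk}`: explicitly,
`∑_j (r + q x_j∂_j) ∂_j^{rk} (φ̄_r f) = r φ̄_r (D_{q,k} f)`. -/
theorem inflate_dual_comm_Dq {K : Type*} [Field K] [CharZero K] {n : ℕ} (hn : 1 ≤ n)
    (q : K) (r : ℕ) (hr : 1 ≤ r)
    (φ : MvPolynomial (Fin n) K →ₗ[K] MvPolynomial (Fin n) K)
    (hφ : ∀ a : Fin n →₀ ℕ,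
      φ (monomial a 1)
        = (((∏ j, (a j).factorial : ℕ) : K) / ((∏ j, (r * a j).factorial : ℕ) : K)) •
            monomial (r • a) 1)
    (k : ℕ) :
    (∀ f : MvPolynomial (Fin n) K,
      ∑ j : Fin n,
          ((r : K) • ((((pderiv j).toLinearMap :
                Module.End K (MvPolynomial (Fin n) K)) ^ (r * k)) (φ f))
            + q • (X j * pderiv j ((((pderiv j).toLinearMap :
                Module.End K (MvPolynomial (Fin n) K)) ^ (r * k)) (φ f))))
        = (r : K) • φ (Dq1 n q k f))
    ∧ Dq1 n (q / (r : K)) (r * k) * φ = φ * Dq1 n q k := by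
  have hr0 : (r : K) ≠ 0 := by
    rw [Nat.cast_ne_zero]; omega
  have hA : ∀ (j : Fin n) (f : MvPolynomial (Fin n) K),
      (((pderiv j).toLinearMap : Module.End K (MvPolynomial (Fin n) K)) ^ (r * k)) (φ f)
        = φ ((((pderiv j).toLinearMap : Module.End K (MvPolynomial (Fin n) K)) ^ k) f) := by
    intro j f
    have h : SemiconjBy (φ : Module.End K (MvPolynomial (Fin n) K)) (pderiv j).toLinearMap
        (((pderiv j).toLinearMap : Module.End K (MvPolynomial (Fin n) K)) ^ r) :=
      (aux_one r hr φ hφ j).symm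
    have h2 := (h.pow_right k).eq
    rw [← pow_mul] at h2
    exact (LinearMap.congr_fun h2 f).symm
  have hD : ∀ (q : K) (k : ℕ) (f : MvPolynomial (Fin n) K), Dq1 n q k f
      = ∑ j : Fin n, ((((pderiv j).toLinearMap :
                Module.End K (MvPolynomial (Fin n) K)) ^ k) f
            + q • (X j * pderiv j ((((pderiv j).toLinearMap :
                Module.End K (MvPolynomial (Fin n) K)) ^ k) f))) := by
    intro q k f
    rw [Dq1, LinearMap.sum_apply]
    rfl
  refine ⟨fun f => ?_, LinearMap.ext fun f => ?_⟩
  · rw [hD, map_sum, Finset.smul_sum]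
    refine Finset.sum_congr rfl fun j _ => ?_
    rw [hA, aux_two r φ hφ, map_add, map_smul, smul_add, smul_comm q]
  · rw [Module.End.mul_apply, Module.End.mul_apply, hD, hD, map_sum]
    refine Finset.sum_congr rfl fun j _ => ?_
    rw [hA, aux_two r φ hφ, map_add, map_smul, smul_smul, div_mul_cancel₀ _ hr0]
end

section
/- Let r ≥ 1 be an integer and let φ_r : K[x_1,…,x_n] → K[x_1,…,x_n] be the K-algebra endomorphism determined by x_j ↦ x_j^r for all j. For k ∈ ℕ define the deformed power sum operator P_{q,k} := Σ_{j=1}^n x_j^k·(1 + q·x_j∂_{x_j}). Then for every k ∈ ℕ and every f ∈ K[x_1,…,x_n], Σ_{j=1}^n x_j^{rk}(r + q·x_j∂_{x_j})(φ_r f) = r·φ_r(P_{q,k} f). Equivalently, P_{q/r, rk} ∘ φ_r = φ_r ∘ P_{q,k}. -/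
open MvPolynomial

/-- The deformed power sum operator `P_{q,k} = ∑_j x_j^k (1 + q x_j ∂_j)` on `K[x_1,…,x_n]`. -/
noncomputable def Pq1 {K : Type*} [Field K] (n : ℕ) (q : K) (k : ℕ) :
    Module.End K (MvPolynomial (Fin n) K) :=
  ∑ j : Fin n,
    LinearMap.mulLeft K (X j ^ k) *
      (1 + q • (LinearMap.mulLeft K (X j) * (pderiv j).toLinearMap))

theorem euler_inflate {K : Type*} [Field K] {n : ℕ} (r : ℕ) (hr : 1 ≤ r) (j : Fin n)
    (f : MvPolynomial (Fin n) K) :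
    X j * pderiv j (aeval (fun j : Fin n => (X j : MvPolynomial (Fin n) K) ^ r) f)
      = (r : K) • aeval (fun j : Fin n => (X j : MvPolynomial (Fin n) K) ^ r)
          (X j * pderiv j f) := by
  induction f using MvPolynomial.induction_on with
  | C a => simp
  | add p q hp hq => simp only [map_add, mul_add, smul_add, hp, hq]
  | mul_X p i hp =>
    have hi : X j * pderiv j ((X i : MvPolynomial (Fin n) K) ^ r)
        = (r : K) • aeval (fun j : Fin n => (X j : MvPolynomial (Fin n) K) ^ r)
          (X j * pderiv j (X i : MvPolynomial (Fin n) K)) := by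
      obtain ⟨s, rfl⟩ : ∃ s, r = s + 1 := ⟨r - 1, by omega⟩
      by_cases h : i = j
      · subst h
        simp [Derivation.leibniz_pow, MvPolynomial.smul_eq_C_mul]
        ring
      · simp [Derivation.leibniz_pow, pderiv_X_of_ne h]
    simp only [map_mul, aeval_X, Derivation.leibniz, smul_eq_mul, map_add,
      MvPolynomial.smul_eq_C_mul] at hp hi ⊢
    linear_combination (X i ^ r) * hp +
      (aeval (fun j : Fin n => (X j : MvPolynomial (Fin n) K) ^ r) p) * hi

theorem Pq1_apply' {K : Type*} [Field K] (n : ℕ) (q : K) (k : ℕ)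
    (f : MvPolynomial (Fin n) K) :
    Pq1 n q k f = ∑ j : Fin n, X j ^ k * (f + q • (X j * pderiv j f)) := by
  simp [Pq1, LinearMap.sum_apply]

/-- The inflation `φ_r : x_j ↦ x_j^r` intertwines `P_{q,k}` and `P_{q/r, rk}`: explicitly,
`∑_j x_j^{rk}(r + q x_j∂_j)(φ_r f) = r φ_r(P_{q,k} f)`. -/
theorem inflate_comm_Pq {K : Type*} [Field K] [CharZero K] {n : ℕ} (hn : 1 ≤ n)
    (q : K) (r : ℕ) (hr : 1 ≤ r) (k : ℕ) :
    (∀ f : MvPolynomial (Fin n) K,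
      ∑ j : Fin n,
          X j ^ (r * k) *
            ((r : K) • (aeval (fun j : Fin n => (X j : MvPolynomial (Fin n) K) ^ r) f)
              + q • (X j * pderiv j
                  (aeval (fun j : Fin n => (X j : MvPolynomial (Fin n) K) ^ r) f)))
        = (r : K) • aeval (fun j : Fin n => (X j : MvPolynomial (Fin n) K) ^ r)
            (Pq1 n q k f))
    ∧ Pq1 n (q / (r : K)) (r * k) ∘ₗ
          (aeval (fun j : Fin n => (X j : MvPolynomial (Fin n) K) ^ r)).toLinearMap
        = (aeval (fun j : Fin n => (X j : MvPolynomial (Fin n) K) ^ r)).toLinearMap ∘ₗ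
            Pq1 n q k := by
  have hr0 : (r : K) ≠ 0 := by
    exact_mod_cast (by omega : r ≠ 0)
  constructor
  · intro f
    rw [Pq1_apply', map_sum, Finset.smul_sum]
    refine Finset.sum_congr rfl fun j _ => ?_
    rw [euler_inflate r hr, map_mul _ (X j ^ k), map_add, map_smul, map_pow, aeval_X, ← pow_mul,
      smul_comm q (r : K), ← smul_add, mul_smul_comm]
  · refine LinearMap.ext fun f => ?_
    simp only [LinearMap.comp_apply, AlgHom.toLinearMap_apply]
    rw [Pq1_apply', Pq1_apply', map_sum]
    refine Finset.sum_congr rfl fun j _ => ?_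
    rw [euler_inflate r hr, map_mul _ (X j ^ k), map_add, map_smul, map_pow, aeval_X, ← pow_mul,
      smul_smul, div_mul_cancel₀ _ hr0]
end

section
/- Let m ≥ 1 be an integer and suppose that 1 + q·b ≠ 0 for every integer b with 1 ≤ b ≤ m (i.e., q is not of the form −1/b with 1 ≤ b ≤ m). Then the 2m polynomials {1, x, x^2, …, x^{m−1}, x^m − y^m, y, y^2, …, y^{m−1}} form a K-basis of the space H_q(G(m,m,2)) := {f ∈ K[x,y] : D_{q,m} f = 0, D_{q,2m} f = 0, ∂_x∂_y f = 0} of q-harmonic polynomials for the dihedral group G(m,m,2). In particular this space has dimension 2m. -/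
open MvPolynomial

/-- The deformed operator `D_{q,k} = (1 + q x∂_x)∂_x^k + (1 + q y∂_y)∂_y^k` on `K[x,y]`,
with `x = X 0` and `y = X 1`. -/
noncomputable def D2 {K : Type*} [Field K] (q : K) (k : ℕ) :
    Module.End K (MvPolynomial (Fin 2) K) :=
  (1 + q • (LinearMap.mulLeft K (X 0) * (pderiv 0).toLinearMap)) *
      ((pderiv (0 : Fin 2)).toLinearMap : Module.End K (MvPolynomial (Fin 2) K)) ^ k
    + (1 + q • (LinearMap.mulLeft K (X 1) * (pderiv 1).toLinearMap)) *
        ((pderiv (1 : Fin 2)).toLinearMap : Module.End K (MvPolynomial (Fin 2) K)) ^ k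

/-- The deformed Pochhammer symbol `⟨d⟩_k = d(d-1)⋯(d-k+1)(1 + q(d-k))`. -/
noncomputable def tp {K : Type*} [Field K] (q : K) (d k : ℕ) : K :=
  (∏ i ∈ Finset.range k, ((d : K) - (i : K))) * (1 + q * ((d : K) - (k : K)))

theorem coeff_pderiv_aux {K : Type*} [Field K] (i : Fin 2) (f : MvPolynomial (Fin 2) K)
    (e : Fin 2 →₀ ℕ) :
    coeff e (pderiv i f) = ((e i : K) + 1) * coeff (e + Finsupp.single i 1) f := by
  induction f using MvPolynomial.induction_on' with
  | monomial u a =>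
    rw [pderiv_monomial, coeff_monomial, coeff_monomial]
    by_cases h : u = e + Finsupp.single i 1
    · subst h
      simp [mul_comm]
    · rw [if_neg h, mul_zero]
      split_ifs with h2
      · have : u i = 0 := by
          by_contra h3
          apply h
          rw [← h2]
          ext j
          by_cases hj : j = i
          · subst hj; simp; omega
          · simp [Finsupp.single_apply, Ne.symm hj]
        simp [this]
      · rfl
  | add p r hp hr => simp [hp, hr, mul_add]

theorem coeff_X_mul_pderiv_aux {K : Type*} [Field K] (i : Fin 2) (f : MvPolynomial (Fin 2) K)
    (e : Fin 2 →₀ ℕ) :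
    coeff e (X i * pderiv i f) = (e i : K) * coeff e f := by
  rw [coeff_X_mul']
  split_ifs with h
  · have h0 : e i ≠ 0 := by simpa using h
    have h1 : e - Finsupp.single i 1 + Finsupp.single i 1 = e := by
      ext j
      by_cases hj : j = i
      · subst hj; simp; omega
      · simp [Finsupp.single_apply, Ne.symm hj]
    rw [coeff_pderiv_aux, h1]
    congr 1
    have : e i = (e i - 1) + 1 := by omega
    conv_rhs => rw [this]
    simp
  · have h0 : e i = 0 := by simpa using h
    simp [h0]

theorem coeff_pderiv_pow_aux {K : Type*} [Field K] (i : Fin 2) (k : ℕ) :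
    ∀ (f : MvPolynomial (Fin 2) K) (e : Fin 2 →₀ ℕ),
    coeff e ((((pderiv i).toLinearMap : Module.End K (MvPolynomial (Fin 2) K)) ^ k) f)
      = ((e i + 1).ascFactorial k : K) * coeff (e + Finsupp.single i k) f := by
  induction k with
  | zero => intro f e; simp
  | succ k ih =>
    intro f e
    rw [pow_succ, Module.End.mul_apply, ih]
    have := coeff_pderiv_aux i f (e + Finsupp.single i k)
    simp only [Derivation.coeFn_coe] at *
    rw [this, add_assoc, ← Finsupp.single_add, Nat.ascFactorial_succ]
    simp
    ring

theorem coeff_D2_aux {K : Type*} [Field K] (q : K) (k : ℕ) (f : MvPolynomial (Fin 2) K)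
    (e : Fin 2 →₀ ℕ) :
    coeff e (D2 q k f) =
      (1 + q * (e 0 : K)) * (((e 0 + 1).ascFactorial k : K) * coeff (e + Finsupp.single 0 k) f)
      + (1 + q * (e 1 : K)) *
        (((e 1 + 1).ascFactorial k : K) * coeff (e + Finsupp.single 1 k) f) := by
  have h0 := coeff_X_mul_pderiv_aux 0
    ((((pderiv 0).toLinearMap : Module.End K (MvPolynomial (Fin 2) K)) ^ k) f) e
  have h1 := coeff_X_mul_pderiv_aux 1
    ((((pderiv 1).toLinearMap : Module.End K (MvPolynomial (Fin 2) K)) ^ k) f) e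
  rw [coeff_pderiv_pow_aux] at h0 h1
  simp only [D2, LinearMap.add_apply, Module.End.mul_apply, Module.End.one_apply,
    LinearMap.smul_apply, LinearMap.mulLeft_apply, coeff_add, coeff_smul, Derivation.coeFn_coe,
    h0, h1, coeff_pderiv_pow_aux, smul_eq_mul]
  ring

theorem fin2_eq_iff (a b : Fin 2 →₀ ℕ) : a = b ↔ a 0 = b 0 ∧ a 1 = b 1 := by
  constructor
  · rintro rfl; simp
  · rintro ⟨h0, h1⟩
    ext j
    fin_cases j <;> assumption

/-- the family -/
noncomputable def vfam (K : Type*) [Field K] (m : ℕ) (i : Fin (2 * m)) : MvPolynomial (Fin 2) K :=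
  if (i : ℕ) < m then (X 0 : MvPolynomial (Fin 2) K) ^ (i : ℕ)
      else if (i : ℕ) = m then (X 0 : MvPolynomial (Fin 2) K) ^ m - X 1 ^ m
      else (X 1 : MvPolynomial (Fin 2) K) ^ (2 * m - (i : ℕ))

/-- exponents dual to the family -/
noncomputable def expo (m : ℕ) (i : Fin (2 * m)) : Fin 2 →₀ ℕ :=
  if (i : ℕ) ≤ m then Finsupp.single 0 (i : ℕ) else Finsupp.single 1 (2 * m - (i : ℕ))

theorem vfam_dual {K : Type*} [Field K] (m : ℕ) (hm : 1 ≤ m) (i j : Fin (2 * m)) :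
    coeff (expo m i) (vfam K m j) = if i = j then 1 else 0 := by
  have hi := i.2
  have hj := j.2
  unfold expo vfam
  simp only [Fin.ext_iff]
  split_ifs <;> simp [coeff_X_pow, fin2_eq_iff, Finsupp.single_apply] <;> grind

/-- the space -/
noncomputable def Hsp {K : Type*} [Field K] (q : K) (m : ℕ) :
    Submodule K (MvPolynomial (Fin 2) K) :=
  LinearMap.ker (D2 q m) ⊓ LinearMap.ker (D2 q (2 * m)) ⊓
          LinearMap.ker ((pderiv 0).toLinearMap * (pderiv 1).toLinearMap :
            Module.End K (MvPolynomial (Fin 2) K))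

theorem mem_Hsp {K : Type*} [Field K] (q : K) (m : ℕ) (f : MvPolynomial (Fin 2) K) :
    f ∈ Hsp q m ↔ (∀ e, coeff e (D2 q m f) = 0) ∧ (∀ e, coeff e (D2 q (2 * m) f) = 0) ∧
      ∀ e : Fin 2 →₀ ℕ, ((e 0 : K) + 1) * (((e 1 : K) + 1) *
        coeff (e + Finsupp.single 0 1 + Finsupp.single 1 1) f) = 0 := by
  have key : ∀ e : Fin 2 →₀ ℕ, coeff e (pderiv 0 (pderiv 1 f)) = ((e 0 : K) + 1) *
      (((e 1 : K) + 1) * coeff (e + Finsupp.single 0 1 + Finsupp.single 1 1) f) := by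
    intro e
    rw [coeff_pderiv_aux, coeff_pderiv_aux]
    simp
  unfold Hsp
  simp only [Submodule.mem_inf, LinearMap.mem_ker, Module.End.mul_apply, Derivation.coeFn_coe,
    MvPolynomial.ext_iff, coeff_zero, key, and_assoc]

theorem vfam_mem {K : Type*} [Field K] (q : K) (m : ℕ) (hm : 1 ≤ m) (i : Fin (2 * m)) :
    vfam K m i ∈ Hsp q m := by
  have hi := i.2
  rw [mem_Hsp]
  refine ⟨fun e => ?_, fun e => ?_, fun e => ?_⟩
  · rw [coeff_D2_aux]
    unfold vfam
    split_ifs with h1 h2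
    · simp only [coeff_X_pow, fin2_eq_iff, Finsupp.single_apply, Finsupp.add_apply]
      simp
      rw [if_neg (by omega), if_neg (by omega)]
      simp
    · simp only [coeff_X_pow, coeff_sub, fin2_eq_iff, Finsupp.single_apply, Finsupp.add_apply]
      simp
      by_cases he : e 0 = 0 ∧ e 1 = 0
      · obtain ⟨ha, hb⟩ := he
        have : m ≠ 0 := by omega
        simp [ha, hb, this, this.symm]
      · rw [if_neg (by omega), if_neg (by omega), if_neg (by omega), if_neg (by omega)]
        simp
    · simp only [coeff_X_pow, fin2_eq_iff, Finsupp.single_apply, Finsupp.add_apply]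
      simp
      rw [if_neg (by omega), if_neg (by omega)]
      simp
  · rw [coeff_D2_aux]
    unfold vfam
    split_ifs with h1 h2 <;>
    · simp only [coeff_X_pow, coeff_sub, fin2_eq_iff, Finsupp.single_apply, Finsupp.add_apply]
      simp
      repeat rw [if_neg (by omega)]
      simp
  · unfold vfam
    split_ifs with h1 h2 <;>
    · simp only [coeff_X_pow, coeff_sub, fin2_eq_iff, Finsupp.single_apply, Finsupp.add_apply]
      simp

theorem Hsp_zero {K : Type*} [Field K] [CharZero K] (q : K)
    (m : ℕ) (hm : 1 ≤ m) (hq : ∀ b : ℕ, 1 ≤ b → b ≤ m → 1 + q * (b : K) ≠ 0)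
    (f : MvPolynomial (Fin 2) K) (hf : f ∈ Hsp q m)
    (h0 : ∀ i, coeff (expo m i) f = 0) : f = 0 := by
  rw [mem_Hsp] at hf
  obtain ⟨hA, hB, hC⟩ := hf
  have hmix : ∀ e : Fin 2 →₀ ℕ, e 0 ≠ 0 → e 1 ≠ 0 → coeff e f = 0 := by
    intro e ha hb
    have h := hC (e - Finsupp.single 0 1 - Finsupp.single 1 1)
    have he : e - Finsupp.single 0 1 - Finsupp.single 1 1 + Finsupp.single 0 1
        + Finsupp.single 1 1 = e := by
      rw [fin2_eq_iff]
      simp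
      omega
    rw [he] at h
    rcases mul_eq_zero.1 h with h | h
    · exact absurd h (Nat.cast_add_one_ne_zero _)
    · rcases mul_eq_zero.1 h with h | h
      · exact absurd h (Nat.cast_add_one_ne_zero _)
      · exact h
  have asc : ∀ n k : ℕ, ((n + 1).ascFactorial k : K) ≠ 0 := by
    intro n k
    exact_mod_cast (Nat.ascFactorial_pos _ _).ne'
  have pure0 : ∀ k n : ℕ, 1 ≤ k → 1 ≤ n → (∀ e, coeff e (D2 q k f) = 0) →
      (1 + q * (n : K)) * coeff (Finsupp.single 0 (n + k)) f = 0 := by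
    intro k n hk hn hD
    have h := hD (Finsupp.single 0 n)
    rw [coeff_D2_aux, hmix (Finsupp.single 0 n + Finsupp.single 1 k) (by simp; omega)
      (by simp; omega), ← Finsupp.single_add] at h
    simp only [Finsupp.single_eq_same, mul_zero, add_zero] at h
    rw [mul_left_comm] at h
    exact (mul_eq_zero.1 h).resolve_left (asc _ _)
  have pure1 : ∀ k n : ℕ, 1 ≤ k → 1 ≤ n → (∀ e, coeff e (D2 q k f) = 0) →
      (1 + q * (n : K)) * coeff (Finsupp.single 1 (n + k)) f = 0 := by
    intro k n hk hn hD
    have h := hD (Finsupp.single 1 n)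
    rw [coeff_D2_aux, hmix (Finsupp.single 1 n + Finsupp.single 0 k) (by simp; omega)
      (by simp; omega), ← Finsupp.single_add] at h
    simp only [Finsupp.single_eq_same, mul_zero, zero_add] at h
    rw [mul_left_comm] at h
    exact (mul_eq_zero.1 h).resolve_left (asc _ _)
  have alg : ∀ (d : ℕ) (c : K), m < d →
      (∀ n, 1 ≤ n → n + m = d → (1 + q * (n : K)) * c = 0) →
      (∀ n, 1 ≤ n → n + 2 * m = d → (1 + q * (n : K)) * c = 0) → c = 0 := by
    intro d c hd h1 h2
    by_cases hd2 : d ≤ 2 * m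
    · exact (mul_eq_zero.1 (h1 (d - m) (by omega) (by omega))).resolve_left
        (hq _ (by omega) (by omega))
    · have e1 := h1 (d - 2 * m + m) (by omega) (by omega)
      have e2 := h2 (d - 2 * m) (by omega) (by omega)
      push_cast at e1
      by_contra hc
      have f1 := (mul_eq_zero.1 e1).resolve_right hc
      have f2 := (mul_eq_zero.1 e2).resolve_right hc
      have f3 : q * (m : K) = 0 := by linear_combination f1 - f2
      have hmK : (m : K) ≠ 0 := by exact_mod_cast (by omega : m ≠ 0)
      have : q = 0 := (mul_eq_zero.1 f3).resolve_right hmK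
      simp [this] at f2
  have x_low : ∀ d, d ≤ m → coeff (Finsupp.single 0 d) f = 0 := by
    intro d hd
    have := h0 ⟨d, by omega⟩
    simpa [expo, hd] using this
  have x_all : ∀ d, coeff (Finsupp.single 0 d) f = 0 := by
    intro d
    by_cases hd : d ≤ m
    · exact x_low d hd
    · refine alg d _ (by omega) ?_ ?_
      · rintro n hn rfl; exact pure0 m n hm hn hA
      · rintro n hn rfl; exact pure0 (2 * m) n (by omega) hn hB
  have y_all : ∀ d, coeff (Finsupp.single 1 d) f = 0 := by
    intro d
    rcases Nat.lt_trichotomy d m with hd | hd | hd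
    · by_cases hz : d = 0
      · subst hz; simpa using x_all 0
      · have := h0 ⟨2 * m - d, by omega⟩
        have h3 : 2 * m - (2 * m - d) = d := by omega
        have h4 : ¬ (2 * m - d ≤ m) := by omega
        simpa only [expo, if_neg h4, h3] using this
    · subst hd
      have h := hA 0
      rw [coeff_D2_aux, zero_add, zero_add, x_all] at h
      simp only [Finsupp.coe_zero, Pi.zero_apply, Nat.cast_zero, mul_zero, add_zero, zero_add,
        one_mul] at h
      exact (mul_eq_zero.1 h).resolve_left (by simpa using asc 0 d)
    · refine alg d _ (by omega) ?_ ?_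
      · rintro n hn rfl; exact pure1 m n hm hn hA
      · rintro n hn rfl; exact pure1 (2 * m) n (by omega) hn hB
  ext e
  rw [coeff_zero]
  by_cases ha : e 0 = 0
  · have : e = Finsupp.single 1 (e 1) := by rw [fin2_eq_iff]; simp [ha]
    rw [this]; exact y_all _
  · by_cases hb : e 1 = 0
    · have : e = Finsupp.single 0 (e 0) := by rw [fin2_eq_iff]; simp [hb]
      rw [this]; exact x_all _
    · exact hmix e ha hb

theorem main_aux {K : Type*} [Field K] [CharZero K] (q : K)
    (m : ℕ) (hm : 1 ≤ m) (hq : ∀ b : ℕ, 1 ≤ b → b ≤ m → 1 + q * (b : K) ≠ 0) :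
    LinearIndependent K (vfam K m) ∧ Submodule.span K (Set.range (vfam K m)) = Hsp q m
      ∧ Module.finrank K (Hsp q m) = 2 * m := by
  have co : ∀ (g : Fin (2 * m) → K) (i : Fin (2 * m)),
      coeff (expo m i) (∑ j, g j • vfam K m j) = g i := by
    intro g i
    simp [coeff_sum, coeff_smul, vfam_dual m hm]
  have hli : LinearIndependent K (vfam K m) := by
    rw [Fintype.linearIndependent_iff]
    intro g hg i
    rw [← co g i, hg, coeff_zero]
  have hsp : Submodule.span K (Set.range (vfam K m)) = Hsp q m := by
    apply le_antisymm
    · rw [Submodule.span_le]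
      rintro _ ⟨i, rfl⟩
      exact vfam_mem q m hm i
    · intro f hf
      have hs : (∑ j, coeff (expo m j) f • vfam K m j) ∈
          Submodule.span K (Set.range (vfam K m)) :=
        Submodule.sum_mem _ fun j _ => Submodule.smul_mem _ _ (Submodule.subset_span ⟨j, rfl⟩)
      have hs' : (∑ j, coeff (expo m j) f • vfam K m j) ∈ Hsp q m :=
        Submodule.sum_mem _ fun j _ => Submodule.smul_mem _ _ (vfam_mem q m hm j)
      have := Hsp_zero q m hm hq _ (Submodule.sub_mem _ hf hs') (by
        intro i
        rw [coeff_sub, co (fun j => coeff (expo m j) f) i, sub_self])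
      rw [sub_eq_zero.1 this]
      exact hs
  refine ⟨hli, hsp, ?_⟩
  rw [← hsp, finrank_span_eq_card hli, Fintype.card_fin]

/-- For `q` not of the form `-1/b` with `1 ≤ b ≤ m`, the `2m` polynomials
`1, x, …, x^{m-1}, x^m - y^m, y^{m-1}, …, y` form a basis of the `q`-harmonic
polynomials for the dihedral group `G(m,m,2)`; in particular that space has
dimension `2m`. -/
theorem basis_qHarmonic_dihedral {K : Type*} [Field K] [CharZero K] (q : K)
    (m : ℕ) (hm : 1 ≤ m) (hq : ∀ b : ℕ, 1 ≤ b → b ≤ m → 1 + q * (b : K) ≠ 0) :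
    LinearIndependent K (fun i : Fin (2 * m) =>
      if (i : ℕ) < m then (X 0 : MvPolynomial (Fin 2) K) ^ (i : ℕ)
      else if (i : ℕ) = m then (X 0 : MvPolynomial (Fin 2) K) ^ m - X 1 ^ m
      else (X 1 : MvPolynomial (Fin 2) K) ^ (2 * m - (i : ℕ)))
    ∧ Submodule.span K (Set.range (fun i : Fin (2 * m) =>
        if (i : ℕ) < m then (X 0 : MvPolynomial (Fin 2) K) ^ (i : ℕ)
        else if (i : ℕ) = m then (X 0 : MvPolynomial (Fin 2) K) ^ m - X 1 ^ m
        else (X 1 : MvPolynomial (Fin 2) K) ^ (2 * m - (i : ℕ))))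
      = LinearMap.ker (D2 q m) ⊓ LinearMap.ker (D2 q (2 * m)) ⊓
          LinearMap.ker ((pderiv 0).toLinearMap * (pderiv 1).toLinearMap :
            Module.End K (MvPolynomial (Fin 2) K))
    ∧ Module.finrank K
        ↥(LinearMap.ker (D2 q m) ⊓ LinearMap.ker (D2 q (2 * m)) ⊓
            LinearMap.ker ((pderiv 0).toLinearMap * (pderiv 1).toLinearMap :
              Module.End K (MvPolynomial (Fin 2) K)))
        = 2 * m := by
  exact main_aux q m hm hq
end

section
/- Let m ≥ 1 and let b be an integer with 1 ≤ b < m, and suppose q = −1/b. Then the 2m+2 polynomials {1, x, x^2, …, x^{m−1}, x^m − y^m, y, y^2, …, y^{m−1}} ∪ {x^{m+b}, y^{m+b}} form a K-basis of the space H_q(G(m,m,2)) := {f ∈ K[x,y] : D_{q,m} f = 0, D_{q,2m} f = 0, ∂_x∂_y f = 0} of q-harmonic polynomials for the dihedral group G(m,m,2). -/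
open MvPolynomial

theorem aux_coeff_pd {K : Type*} [Field K] (i : Fin 2) (f : MvPolynomial (Fin 2) K)
    (n : Fin 2 →₀ ℕ) :
    coeff n (pderiv i f) = ((n i : K) + 1) * coeff (n + Finsupp.single i 1) f := by
  classical
  induction f using MvPolynomial.induction_on' with
  | monomial u a =>
    rw [pderiv_monomial, coeff_monomial, coeff_monomial]
    by_cases h : u = n + Finsupp.single i 1
    · subst h
      simp
      ring
    · rw [if_neg h]
      by_cases h2 : u i = 0
      · simp [h2]
      · rw [if_neg]
        · simp
        · intro h3
          apply h
          rw [← h3]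
          ext j
          by_cases hj : i = j
          · subst hj
            simp
            omega
          · simp [Finsupp.single_apply, hj]
  | add p q hp hq =>
    rw [map_add, coeff_add, coeff_add, hp, hq]
    ring

theorem aux_coeff_pd_pow {K : Type*} [Field K] (i : Fin 2) (k : ℕ) :
    ∀ (f : MvPolynomial (Fin 2) K) (n : Fin 2 →₀ ℕ),
    coeff n ((((pderiv i).toLinearMap : Module.End K (MvPolynomial (Fin 2) K)) ^ k) f)
      = (((n i + 1).ascFactorial k : ℕ) : K) * coeff (n + Finsupp.single i k) f := by
  induction k with
  | zero => intro f n; simp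
  | succ k ih =>
    intro f n
    rw [pow_succ, Module.End.mul_apply, ih]
    have h := aux_coeff_pd i f (n + Finsupp.single i k)
    rw [add_assoc, ← Finsupp.single_add] at h
    change _ * coeff _ (pderiv i f) = _
    rw [h, Nat.ascFactorial_succ]
    simp
    ring

theorem aux_coeff_euler {K : Type*} [Field K] (i : Fin 2) (f : MvPolynomial (Fin 2) K)
    (n : Fin 2 →₀ ℕ) :
    coeff n (X i * pderiv i f) = (n i : K) * coeff n f := by
  classical
  rw [coeff_X_mul']
  split_ifs with h
  · rw [aux_coeff_pd]
    have h0 : n i ≠ 0 := by simpa using h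
    have : n - Finsupp.single i 1 + Finsupp.single i 1 = n := by
      ext j
      by_cases hj : i = j
      · subst hj
        simp
        omega
      · simp [Finsupp.single_apply, hj]
    rw [this]
    congr 1
    have h2 := DFunLike.congr_fun this i
    simp only [Finsupp.add_apply, Finsupp.single_eq_same] at h2
    rw [← h2]
    push_cast
    simp
  · have h0 : n i = 0 := by simpa using h
    simp [h0]

theorem aux_coeff_D2 {K : Type*} [Field K] (q : K) (k : ℕ) (f : MvPolynomial (Fin 2) K)
    (n : Fin 2 →₀ ℕ) :
    coeff n (D2 q k f) =
      (1 + q * (n 0 : K)) * ((((n 0 + 1).ascFactorial k : ℕ) : K) *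
        coeff (n + Finsupp.single 0 k) f)
      + (1 + q * (n 1 : K)) * ((((n 1 + 1).ascFactorial k : ℕ) : K) *
        coeff (n + Finsupp.single 1 k) f) := by
  have key : ∀ (i : Fin 2) (g : MvPolynomial (Fin 2) K),
      coeff n ((1 + q • (LinearMap.mulLeft K (X i) * (pderiv i).toLinearMap) :
        Module.End K (MvPolynomial (Fin 2) K)) g) = (1 + q * (n i : K)) * coeff n g := by
    intro i g
    have h : (1 + q • (LinearMap.mulLeft K (X i) * (pderiv i).toLinearMap) :
        Module.End K (MvPolynomial (Fin 2) K)) g = g + q • (X i * pderiv i g) := rfl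
    rw [h, coeff_add, coeff_smul, aux_coeff_euler, smul_eq_mul]
    ring
  rw [← aux_coeff_pd_pow, ← aux_coeff_pd_pow, ← key, ← key, ← coeff_add]
  rfl

theorem aux_coeff_mixed {K : Type*} [Field K] (f : MvPolynomial (Fin 2) K)
    (n : Fin 2 →₀ ℕ) :
    coeff n (((pderiv 0).toLinearMap * (pderiv 1).toLinearMap :
            Module.End K (MvPolynomial (Fin 2) K)) f) =
      ((n 0 : K) + 1) * (((n 1 : K) + 1) *
        coeff (n + Finsupp.single 0 1 + Finsupp.single 1 1) f) := by
  change coeff n (pderiv 0 (pderiv 1 f)) = _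
  rw [aux_coeff_pd, aux_coeff_pd]
  simp

theorem aux_D2_X_pow {K : Type*} [Field K] (q : K) (k d : ℕ) (i : Fin 2) (hk : 0 < k)
    (h : d < k ∨ (k < d ∧ 1 + q * ((d - k : ℕ) : K) = 0)) :
    D2 q k ((X i : MvPolynomial (Fin 2) K) ^ d) = 0 := by
  classical
  ext n
  rw [aux_coeff_D2, coeff_X_pow, coeff_X_pow, coeff_zero]
  fin_cases i
  · simp only [Fin.zero_eta, Fin.mk_one, Fin.isValue]
    by_cases h0 : Finsupp.single 0 d = n + Finsupp.single 0 k
    · have h1 := DFunLike.congr_fun h0 0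
      have h1' := DFunLike.congr_fun h0 1
      simp at h1 h1'
      have h2 : Finsupp.single 0 d ≠ n + Finsupp.single 1 k := by
        intro h3
        have := DFunLike.congr_fun h3 1
        simp at this
        omega
      have h4 : 1 + q * (n 0 : K) = 0 := by
        rcases h with h | h
        · omega
        · rw [show n 0 = d - k by omega]; exact h.2
      rw [if_neg h2, h4]; simp
    · rw [if_neg h0, if_neg]
      · simp
      · intro h3
        have := DFunLike.congr_fun h3 1
        simp at this
        omega
  · simp only [Fin.zero_eta, Fin.mk_one, Fin.isValue]
    by_cases h0 : Finsupp.single 1 d = n + Finsupp.single 1 k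
    · have h1 := DFunLike.congr_fun h0 0
      have h1' := DFunLike.congr_fun h0 1
      simp at h1 h1'
      have h2 : Finsupp.single 1 d ≠ n + Finsupp.single 0 k := by
        intro h3
        have := DFunLike.congr_fun h3 0
        simp at this
        omega
      have h4 : 1 + q * (n 1 : K) = 0 := by
        rcases h with h | h
        · omega
        · rw [show n 1 = d - k by omega]; exact h.2
      rw [if_neg h2, h4]; simp
    · rw [if_neg h0, if_neg]
      · simp
      · intro h3
        have := DFunLike.congr_fun h3 0
        simp at this
        omega

theorem aux_mixed_X_pow {K : Type*} [Field K] (d : ℕ) (i : Fin 2) :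
    ((pderiv 0).toLinearMap * (pderiv 1).toLinearMap :
            Module.End K (MvPolynomial (Fin 2) K)) ((X i) ^ d) = 0 := by
  classical
  ext n
  rw [aux_coeff_mixed, coeff_X_pow, if_neg]
  · simp
  · intro h
    have h0 := DFunLike.congr_fun h 0
    have h1 := DFunLike.congr_fun h 1
    fin_cases i <;> simp at h0 h1

theorem aux_D2_sub {K : Type*} [Field K] (q : K) (m : ℕ) :
    D2 q m ((X 0 : MvPolynomial (Fin 2) K) ^ m - X 1 ^ m) = 0 := by
  classical
  by_cases hm : m = 0
  · subst hm; simp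
  ext n
  rw [aux_coeff_D2]
  simp only [coeff_sub, coeff_X_pow, coeff_zero]
  have e : ∀ i : Fin 2, Finsupp.single i m = n + Finsupp.single i m ↔ n = 0 := by
    intro i; simp
  have e1 : Finsupp.single 1 m ≠ n + Finsupp.single (0 : Fin 2) m := by
    intro h
    have := DFunLike.congr_fun h 0
    simp at this
    omega
  have e2 : Finsupp.single 0 m ≠ n + Finsupp.single (1 : Fin 2) m := by
    intro h
    have := DFunLike.congr_fun h 1
    simp at this
    omega
  simp only [e, if_neg e1, if_neg e2]
  by_cases hn : n = 0
  · subst hn; simp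
  · simp [hn]

/-- For the singular value `q = -1/b` with `1 ≤ b < m`, the `2m+2` polynomials
`1, x, …, x^{m-1}, x^m - y^m, y^{m-1}, …, y, x^{m+b}, y^{m+b}` form a basis of the
`q`-harmonic polynomials for the dihedral group `G(m,m,2)`. -/
theorem basis_qHarmonic_dihedral_singular {K : Type*} [Field K] [CharZero K] (q : K)
    (m b : ℕ) (hb : 1 ≤ b) (hbm : b < m) (hq : q = -(1 : K) / (b : K)) :
    LinearIndependent K (fun i : Fin (2 * m + 2) =>
      if (i : ℕ) < m then (X 0 : MvPolynomial (Fin 2) K) ^ (i : ℕ)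
      else if (i : ℕ) = m then (X 0 : MvPolynomial (Fin 2) K) ^ m - X 1 ^ m
      else if (i : ℕ) < 2 * m then (X 1 : MvPolynomial (Fin 2) K) ^ (2 * m - (i : ℕ))
      else if (i : ℕ) = 2 * m then (X 0 : MvPolynomial (Fin 2) K) ^ (m + b)
      else (X 1 : MvPolynomial (Fin 2) K) ^ (m + b))
    ∧ Submodule.span K (Set.range (fun i : Fin (2 * m + 2) =>
        if (i : ℕ) < m then (X 0 : MvPolynomial (Fin 2) K) ^ (i : ℕ)
        else if (i : ℕ) = m then (X 0 : MvPolynomial (Fin 2) K) ^ m - X 1 ^ m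
        else if (i : ℕ) < 2 * m then (X 1 : MvPolynomial (Fin 2) K) ^ (2 * m - (i : ℕ))
        else if (i : ℕ) = 2 * m then (X 0 : MvPolynomial (Fin 2) K) ^ (m + b)
        else (X 1 : MvPolynomial (Fin 2) K) ^ (m + b)))
      = LinearMap.ker (D2 q m) ⊓ LinearMap.ker (D2 q (2 * m)) ⊓
          LinearMap.ker ((pderiv 0).toLinearMap * (pderiv 1).toLinearMap :
            Module.End K (MvPolynomial (Fin 2) K)) := by
  classical
  have hbK : (b : K) ≠ 0 := by exact_mod_cast (by omega : b ≠ 0)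
  have hqb : ∀ d : ℕ, 1 + q * (d : K) = 0 ↔ d = b := by
    intro d
    rw [hq]
    constructor
    · intro h
      field_simp at h
      have : (d : K) = b := by linear_combination -h
      exact_mod_cast this
    · rintro rfl
      field_simp
      ring
  set v := (fun i : Fin (2 * m + 2) =>
      if (i : ℕ) < m then (X 0 : MvPolynomial (Fin 2) K) ^ (i : ℕ)
      else if (i : ℕ) = m then (X 0 : MvPolynomial (Fin 2) K) ^ m - X 1 ^ m
      else if (i : ℕ) < 2 * m then (X 1 : MvPolynomial (Fin 2) K) ^ (2 * m - (i : ℕ))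
      else if (i : ℕ) = 2 * m then (X 0 : MvPolynomial (Fin 2) K) ^ (m + b)
      else (X 1 : MvPolynomial (Fin 2) K) ^ (m + b)) with hv
  constructor
  · rw [Fintype.linearIndependent_iff]
    intro g hg
    let e : Fin (2 * m + 2) → (Fin 2 →₀ ℕ) := fun i =>
      if (i : ℕ) ≤ m then Finsupp.single 0 (i : ℕ)
      else if (i : ℕ) < 2 * m then Finsupp.single 1 (2 * m - (i : ℕ))
      else if (i : ℕ) = 2 * m then Finsupp.single 0 (m + b)
      else Finsupp.single 1 (m + b)
    have hd : ∀ i j, coeff (e j) (v i) = if i = j then 1 else 0 := by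
      intro i j
      have hi := i.2
      have hj := j.2
      simp only [hv, e, Fin.ext_iff]
      split_ifs <;> simp only [coeff_sub, coeff_X_pow, Finsupp.single_eq_single_iff,
          zero_ne_one, one_ne_zero, true_and, false_and, false_or] <;>
        split_ifs <;> first | rfl | (exfalso; omega) | norm_num
    intro j
    have := congrArg (coeff (e j)) hg
    simpa [coeff_sum, hd] using this
  · apply le_antisymm
    · rw [Submodule.span_le]
      rintro _ ⟨i, rfl⟩
      have hi := i.2
      simp only [SetLike.mem_coe, Submodule.mem_inf, LinearMap.mem_ker, hv]
      have hs : m < m + b ∧ 1 + q * ((m + b - m : ℕ) : K) = 0 := by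
        refine ⟨by omega, ?_⟩
        rw [hqb]; omega
      split_ifs with h1 h2 h3 h4
      · exact ⟨⟨aux_D2_X_pow _ _ _ _ (by omega) (by left; omega), aux_D2_X_pow _ _ _ _ (by omega) (by left; omega)⟩,
          aux_mixed_X_pow _ _⟩
      · refine ⟨⟨aux_D2_sub _ _, ?_⟩, ?_⟩
        · rw [map_sub, aux_D2_X_pow _ _ _ _ (by omega) (by left; omega),
            aux_D2_X_pow _ _ _ _ (by omega) (by left; omega), sub_zero]
        · rw [map_sub, aux_mixed_X_pow, aux_mixed_X_pow, sub_zero]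
      · exact ⟨⟨aux_D2_X_pow _ _ _ _ (by omega) (by left; omega), aux_D2_X_pow _ _ _ _ (by omega) (by left; omega)⟩,
          aux_mixed_X_pow _ _⟩
      · exact ⟨⟨aux_D2_X_pow _ _ _ _ (by omega) (Or.inr hs), aux_D2_X_pow _ _ _ _ (by omega) (by left; omega)⟩,
          aux_mixed_X_pow _ _⟩
      · exact ⟨⟨aux_D2_X_pow _ _ _ _ (by omega) (Or.inr hs), aux_D2_X_pow _ _ _ _ (by omega) (by left; omega)⟩,
          aux_mixed_X_pow _ _⟩
    · intro f hf
      simp only [Submodule.mem_inf, LinearMap.mem_ker] at hf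
      obtain ⟨⟨hf1, -⟩, hf3⟩ := hf
      have hmem : ∀ i, v i ∈ Submodule.span K (Set.range v) :=
        fun i => Submodule.subset_span ⟨i, rfl⟩
      have hsub : (X 0 : MvPolynomial (Fin 2) K) ^ m - X 1 ^ m ∈
          Submodule.span K (Set.range v) := by
        have := hmem ⟨m, by omega⟩
        simpa [hv] using this
      have hx : ∀ d, d < m ∨ d = m + b → (X 0 : MvPolynomial (Fin 2) K) ^ d ∈
          Submodule.span K (Set.range v) := by
        rintro d (h | rfl)
        · have := hmem ⟨d, by omega⟩
          simpa [hv, h] using this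
        · have := hmem ⟨2 * m, by omega⟩
          simpa [hv, show ¬ (2 * m < m) by omega, show ¬ (2 * m = m) by omega,
            show m ≠ 0 by omega] using this
      have hy : ∀ d, d < m ∨ d = m + b → (X 1 : MvPolynomial (Fin 2) K) ^ d ∈
          Submodule.span K (Set.range v) := by
        rintro d (h | rfl)
        · by_cases hd : d = 0
          · subst hd
            have := hx 0 (Or.inl h)
            simpa using this
          · have := hmem ⟨2 * m - d, by omega⟩
            simp only [hv, if_neg (show ¬ (2 * m - d < m) by omega),
              if_neg (show ¬ (2 * m - d = m) by omega),
              if_pos (show 2 * m - d < 2 * m by omega),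
              show 2 * m - (2 * m - d) = d by omega] at this
            exact this
        · have := hmem ⟨2 * m + 1, by omega⟩
          simp only [hv, if_neg (show ¬ (2 * m + 1 < m) by omega),
              if_neg (show ¬ (2 * m + 1 = m) by omega),
              if_neg (show ¬ (2 * m + 1 < 2 * m) by omega),
              if_neg (show ¬ (2 * m + 1 = 2 * m) by omega)] at this
          exact this
      set c := coeff (Finsupp.single 0 m) f with hc
      set g := f - c • ((X 0 : MvPolynomial (Fin 2) K) ^ m - X 1 ^ m) with hg
      have hfg : f = g + c • ((X 0 : MvPolynomial (Fin 2) K) ^ m - X 1 ^ m) := by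
        rw [hg]; ring
      have hg1 : D2 q m g = 0 := by
        rw [hg, map_sub, map_smul, hf1, aux_D2_sub, smul_zero, sub_zero]
      have hg3 : ((pderiv 0).toLinearMap * (pderiv 1).toLinearMap :
            Module.End K (MvPolynomial (Fin 2) K)) g = 0 := by
        rw [hg, map_sub, map_smul, hf3, map_sub, aux_mixed_X_pow, aux_mixed_X_pow]
        simp
      have hasc : ∀ a k : ℕ, (((a + 1).ascFactorial k : ℕ) : K) ≠ 0 := by
        intro a k
        have := Nat.ascFactorial_pos a k
        exact_mod_cast this.ne'
      have hmix : ∀ n : Fin 2 →₀ ℕ, n 0 ≠ 0 → n 1 ≠ 0 → coeff n g = 0 := by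
        intro n h0 h1
        have h := aux_coeff_mixed g (n - Finsupp.single 0 1 - Finsupp.single 1 1)
        rw [hg3, coeff_zero] at h
        have hn : n - Finsupp.single 0 1 - Finsupp.single 1 1 + Finsupp.single 0 1
            + Finsupp.single 1 1 = n := by
          ext j
          fin_cases j <;> simp <;> omega
        rw [hn] at h
        have := h.symm
        rw [mul_eq_zero, mul_eq_zero] at this
        rcases this with h | h | h
        · exact absurd h (Nat.cast_add_one_ne_zero _)
        · exact absurd h (Nat.cast_add_one_ne_zero _)
        · exact h
      have hx0 : coeff (Finsupp.single 0 m) g = 0 := by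
        rw [hg, coeff_sub, coeff_smul, coeff_sub, coeff_X_pow, coeff_X_pow, if_pos rfl, if_neg]
        · simp [hc]
        · rw [Finsupp.single_eq_single_iff]
          simp
          omega
      have hy0 : coeff (Finsupp.single 1 m) g = 0 := by
        have h := aux_coeff_D2 q m g 0
        rw [hg1, zero_add, zero_add, hx0] at h
        have h2 := hasc 0 m
        simp at h h2
        rcases h with h | h
        · exact absurd h h2
        · exact h
      have hxd : ∀ d, m < d → d ≠ m + b → coeff (Finsupp.single 0 d) g = 0 := by
        intro d h1 h2
        have h := aux_coeff_D2 q m g (Finsupp.single 0 (d - m))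
        have hz := hmix (Finsupp.single 0 (d - m) + Finsupp.single 1 m)
          (by simp; omega) (by simp; omega)
        rw [hg1, hz, ← Finsupp.single_add, show d - m + m = d by omega, coeff_zero,
          mul_zero, mul_zero, add_zero] at h
        have := h.symm
        rw [mul_eq_zero, mul_eq_zero, Finsupp.single_eq_same, hqb] at this
        rcases this with h | h | h
        · omega
        · exact absurd h (hasc _ _)
        · exact h
      have hyd : ∀ d, m < d → d ≠ m + b → coeff (Finsupp.single 1 d) g = 0 := by
        intro d h1 h2
        have h := aux_coeff_D2 q m g (Finsupp.single 1 (d - m))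
        have hz := hmix (Finsupp.single 1 (d - m) + Finsupp.single 0 m)
          (by simp; omega) (by simp; omega)
        rw [hg1, hz, ← Finsupp.single_add, show d - m + m = d by omega, coeff_zero,
          mul_zero, mul_zero, zero_add] at h
        have := h.symm
        rw [mul_eq_zero, mul_eq_zero, Finsupp.single_eq_same, hqb] at this
        rcases this with h | h | h
        · omega
        · exact absurd h (hasc _ _)
        · exact h
      rw [hfg]
      refine Submodule.add_mem _ ?_ (Submodule.smul_mem _ _ hsub)
      rw [MvPolynomial.as_sum g]
      refine Submodule.sum_mem _ ?_
      intro n hn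
      rw [mem_support_iff] at hn
      have hmono : ∀ (i : Fin 2) (d : ℕ) (a : K),
          monomial (Finsupp.single i d) a = a • (X i : MvPolynomial (Fin 2) K) ^ d := by
        intro i d a
        rw [X_pow_eq_monomial, smul_monomial, smul_eq_mul, mul_one]
      by_cases h1 : n 1 = 0
      · have hn0 : n = Finsupp.single 0 (n 0) := by
          ext j
          fin_cases j <;> simp [h1]
        generalize n 0 = d at hn0
        subst hn0
        rw [hmono]
        apply Submodule.smul_mem
        apply hx
        by_contra hcon
        rcases Nat.lt_trichotomy d m with h | h | h
        · omega
        · subst h; exact hn hx0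
        · exact hn (hxd d h (by omega))
      · by_cases h0 : n 0 = 0
        · have hn0 : n = Finsupp.single 1 (n 1) := by
            ext j
            fin_cases j <;> simp [h0]
          clear h0 h1
          generalize n 1 = d at hn0
          subst hn0
          rw [hmono]
          apply Submodule.smul_mem
          apply hy
          by_contra hcon
          rcases Nat.lt_trichotomy d m with h | h | h
          · omega
          · subst h; exact hn hy0
          · exact hn (hyd d h (by omega))
        · exact absurd (hmix n h0 h1) hn
end

section
/- Let m ≥ 1 and suppose q = −1/m. Then the 2m+1 polynomials {1, x, x^2, …, x^{m−1}, x^m − y^m, y, y^2, …, y^{m−1}} ∪ {x^{2m} − y^{2m}} form a K-basis of the space H_q(G(m,m,2)) := {f ∈ K[x,y] : D_{q,m} f = 0, D_{q,2m} f = 0, ∂_x∂_y f = 0} of q-harmonic polynomials for the dihedral group G(m,m,2). -/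
open MvPolynomial

noncomputable def pt (a b : ℕ) : Fin 2 →₀ ℕ := Finsupp.single 0 a + Finsupp.single 1 b

lemma pt_eq (s : Fin 2 →₀ ℕ) : s = pt (s 0) (s 1) := by
  ext i; fin_cases i <;> simp [pt]

lemma pt_inj (a b a' b' : ℕ) : pt a b = pt a' b' ↔ a = a' ∧ b = b' := by
  constructor
  · intro h
    have h0 := DFunLike.congr_fun h 0
    have h1 := DFunLike.congr_fun h 1
    simp [pt] at h0 h1
    exact ⟨h0, h1⟩
  · rintro ⟨rfl, rfl⟩; rfl

/-- Coefficient of `x^a y^b`. -/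
noncomputable def cf {K : Type*} [Field K] (a b : ℕ) : MvPolynomial (Fin 2) K →ₗ[K] K :=
  MvPolynomial.lcoeff K (pt a b)

section
variable {K : Type*} [Field K]

lemma cf_apply (a b : ℕ) (f : MvPolynomial (Fin 2) K) : cf a b f = coeff (pt a b) f := rfl

lemma cf_ext {f : MvPolynomial (Fin 2) K} (h : ∀ a b, cf a b f = 0) : f = 0 := by
  ext s; rw [pt_eq s]; simpa [cf_apply] using h (s 0) (s 1)

lemma cf_monomial (a b u v : ℕ) (r : K) :
    cf a b (monomial (pt u v) r) = if a = u ∧ b = v then r else 0 := by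
  rw [cf_apply, coeff_monomial]
  simp only [pt_inj, eq_comm]

lemma cf_X0 (a b n : ℕ) :
    cf a b ((X 0 : MvPolynomial (Fin 2) K) ^ n) = if a = n ∧ b = 0 then 1 else 0 := by
  rw [← cf_monomial, X_pow_eq_monomial]; simp [pt]

lemma cf_X1 (a b n : ℕ) :
    cf a b ((X 1 : MvPolynomial (Fin 2) K) ^ n) = if a = 0 ∧ b = n then 1 else 0 := by
  rw [← cf_monomial, X_pow_eq_monomial]; simp [pt]

lemma cf_pd0 (a b : ℕ) (f : MvPolynomial (Fin 2) K) :
    cf a b (pderiv 0 f) = ((a : K) + 1) * cf (a + 1) b f := by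
  induction f using MvPolynomial.induction_on' with
  | monomial s r =>
    rw [pt_eq s, pderiv_monomial]
    have : pt (s 0) (s 1) - Finsupp.single 0 1 = pt (s 0 - 1) (s 1) := by
      ext i; fin_cases i <;> simp [pt]
    rw [this, cf_monomial, cf_monomial]
    rcases hs : s 0 with _ | n
    · simp [pt]
    · simp [pt]
      split_ifs with h
      · rw [h.1]; ring
      · rfl
  | add p q hp hq => simp only [map_add, hp, hq]; ring

lemma cf_pd1 (a b : ℕ) (f : MvPolynomial (Fin 2) K) :
    cf a b (pderiv 1 f) = ((b : K) + 1) * cf a (b + 1) f := by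
  induction f using MvPolynomial.induction_on' with
  | monomial s r =>
    rw [pt_eq s, pderiv_monomial]
    have : pt (s 0) (s 1) - Finsupp.single 1 1 = pt (s 0) (s 1 - 1) := by
      ext i; fin_cases i <;> simp [pt]
    rw [this, cf_monomial, cf_monomial]
    rcases hs : s 1 with _ | n
    · simp [pt]
    · simp [pt]
      split_ifs with h
      · rw [h.2]; ring
      · rfl
  | add p q hp hq => simp only [map_add, hp, hq]; ring

lemma cf_mul0 (a b : ℕ) (f : MvPolynomial (Fin 2) K) : cf (a + 1) b (X 0 * f) = cf a b f := by
  have : pt (a + 1) b = Finsupp.single 0 1 + pt a b := by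
    ext i; fin_cases i <;> simp [pt, add_comm]
  rw [cf_apply, this, coeff_X_mul]; rfl

lemma cf_mul0' (b : ℕ) (f : MvPolynomial (Fin 2) K) : cf 0 b (X 0 * f) = 0 := by
  rw [cf_apply, coeff_X_mul']; simp [pt]

lemma cf_mul1 (a b : ℕ) (f : MvPolynomial (Fin 2) K) : cf a (b + 1) (X 1 * f) = cf a b f := by
  have : pt a (b + 1) = Finsupp.single 1 1 + pt a b := by
    ext i; fin_cases i <;> simp [pt, add_comm]
  rw [cf_apply, this, coeff_X_mul]; rfl

lemma cf_mul1' (a : ℕ) (f : MvPolynomial (Fin 2) K) : cf a 0 (X 1 * f) = 0 := by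
  rw [cf_apply, coeff_X_mul']; simp [pt]

lemma cf_euler0 (a b : ℕ) (f : MvPolynomial (Fin 2) K) :
    cf a b (X 0 * pderiv 0 f) = (a : K) * cf a b f := by
  cases a with
  | zero => simp [cf_mul0']
  | succ a => rw [cf_mul0, cf_pd0]; push_cast; rfl

lemma cf_euler1 (a b : ℕ) (f : MvPolynomial (Fin 2) K) :
    cf a b (X 1 * pderiv 1 f) = (b : K) * cf a b f := by
  cases b with
  | zero => simp [cf_mul1']
  | succ b => rw [cf_mul1, cf_pd1]; push_cast; rfl

lemma cf_pow0 (k a b : ℕ) (f : MvPolynomial (Fin 2) K) :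
    cf a b ((((pderiv (0 : Fin 2)).toLinearMap : Module.End K (MvPolynomial (Fin 2) K)) ^ k) f)
      = ((a + 1).ascFactorial k : K) * cf (a + k) b f := by
  induction k generalizing f with
  | zero => simp
  | succ k ih =>
    rw [pow_succ, Module.End.mul_apply, ih, Nat.ascFactorial_succ]
    simp only [Derivation.coeFn_coe, cf_pd0]
    push_cast
    rw [← add_assoc]; ring

lemma cf_pow1 (k a b : ℕ) (f : MvPolynomial (Fin 2) K) :
    cf a b ((((pderiv (1 : Fin 2)).toLinearMap : Module.End K (MvPolynomial (Fin 2) K)) ^ k) f)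
      = ((b + 1).ascFactorial k : K) * cf a (b + k) f := by
  induction k generalizing f with
  | zero => simp
  | succ k ih =>
    rw [pow_succ, Module.End.mul_apply, ih, Nat.ascFactorial_succ]
    simp only [Derivation.coeFn_coe, cf_pd1]
    push_cast
    rw [← add_assoc]; ring

lemma cf_D2 (q : K) (k a b : ℕ) (f : MvPolynomial (Fin 2) K) :
    cf a b (D2 q k f) = (1 + q * a) * (((a + 1).ascFactorial k : K) * cf (a + k) b f)
      + (1 + q * b) * (((b + 1).ascFactorial k : K) * cf a (b + k) f) := by
  simp only [D2, LinearMap.add_apply, Module.End.mul_apply, Module.End.one_apply,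
    LinearMap.smul_apply, LinearMap.mulLeft_apply, map_add, map_smul, Derivation.coeFn_coe,
    cf_euler0, cf_euler1, cf_pow0, cf_pow1, smul_eq_mul]
  ring

lemma mem_ker_iff [CharZero K] (q : K) (m : ℕ) (hm : 1 ≤ m) (hq : q = -(1 : K) / (m : K))
    (f : MvPolynomial (Fin 2) K) :
    f ∈ LinearMap.ker (D2 q m) ⊓ LinearMap.ker (D2 q (2 * m)) ⊓
          LinearMap.ker ((pderiv 0).toLinearMap * (pderiv 1).toLinearMap :
            Module.End K (MvPolynomial (Fin 2) K)) ↔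
    (∀ a b, cf (a + 1) (b + 1) f = 0) ∧
    (∀ d, m < d → d ≠ 2 * m → cf d 0 f = 0 ∧ cf 0 d f = 0) ∧
    cf m 0 f + cf 0 m f = 0 ∧ cf (2 * m) 0 f + cf 0 (2 * m) f = 0 := by
  have hm0 : (m : K) ≠ 0 := by exact_mod_cast (by omega : m ≠ 0)
  have hasc : ∀ n k : ℕ, ((n + 1).ascFactorial k : K) ≠ 0 := fun n k => by
    exact_mod_cast (Nat.ascFactorial_pos n k).ne'
  have hqm : 1 + q * m = 0 := by rw [hq]; field_simp; ring
  have hqd : ∀ d : ℕ, d ≠ m → 1 + q * d ≠ 0 := by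
    intro d hd h
    apply hd
    have : q * ((d : K) - m) = 0 := by linear_combination h - hqm
    have hq0 : q ≠ 0 := by rintro rfl; simp at hqm
    have := (mul_eq_zero.1 this).resolve_left hq0
    exact_mod_cast sub_eq_zero.1 this
  simp only [Submodule.mem_inf, LinearMap.mem_ker, Module.End.mul_apply, Derivation.coeFn_coe]
  constructor
  · rintro ⟨⟨h1, h2⟩, h3⟩
    have e3 : ∀ a b, cf (a + 1) (b + 1) f = 0 := by
      intro a b
      have := congrArg (cf a b) h3
      rw [cf_pd0, cf_pd1, map_zero] at this
      have ha : (a : K) + 1 ≠ 0 := Nat.cast_add_one_ne_zero a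
      have hb : (b : K) + 1 ≠ 0 := Nat.cast_add_one_ne_zero b
      simpa [ha, hb] using this
    have e3' : ∀ a b, 1 ≤ a → 1 ≤ b → cf a b f = 0 := by
      intro a b ha hb
      obtain ⟨a, rfl⟩ := Nat.exists_eq_add_of_le' ha
      obtain ⟨b, rfl⟩ := Nat.exists_eq_add_of_le' hb
      exact e3 a b
    have key : ∀ k, D2 q k f = 0 → cf k 0 f + cf 0 k f = 0 := by
      intro k h
      have := congrArg (cf 0 0) h
      rw [cf_D2, map_zero] at this
      have h' := hasc 0 k
      simp only [Nat.cast_zero, mul_zero, add_zero, one_mul, zero_add, ← mul_add] at this h'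
      exact (mul_eq_zero.1 this).resolve_left h'
    refine ⟨e3, ?_, key _ h1, key _ h2⟩
    intro d hd hd2
    obtain ⟨n, rfl⟩ := Nat.exists_eq_add_of_lt hd
    have hn := hqd (n + 1) (by omega)
    have ha := hasc (n + 1) m
    constructor
    · have := congrArg (cf (n + 1) 0) h1
      rw [cf_D2, map_zero, e3' (n + 1) (0 + m) (by omega) (by omega)] at this
      rw [show m + n + 1 = n + 1 + m by omega]
      simpa only [mul_zero, add_zero, mul_eq_zero, hn, ha, false_or] using this
    · have := congrArg (cf 0 (n + 1)) h1
      rw [cf_D2, map_zero, e3' (0 + m) (n + 1) (by omega) (by omega)] at this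
      rw [show m + n + 1 = n + 1 + m by omega]
      simpa only [mul_zero, zero_add, mul_eq_zero, hn, ha, false_or] using this
  · rintro ⟨h1, h2, h3, h4⟩
    have e3' : ∀ a b, 1 ≤ a → 1 ≤ b → cf a b f = 0 := by
      intro a b ha hb
      obtain ⟨a, rfl⟩ := Nat.exists_eq_add_of_le' ha
      obtain ⟨b, rfl⟩ := Nat.exists_eq_add_of_le' hb
      exact h1 a b
    have key : ∀ k, 1 ≤ k → cf k 0 f + cf 0 k f = 0 →
        (∀ n : ℕ, 1 ≤ n → (1 + q * n = 0) ∨ (cf (n + k) 0 f = 0 ∧ cf 0 (n + k) f = 0)) →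
        D2 q k f = 0 := by
      intro k hk hs hz
      apply cf_ext
      intro a b
      rw [cf_D2]
      rcases Nat.eq_zero_or_pos a with rfl | ha <;> rcases Nat.eq_zero_or_pos b with rfl | hb
      · simp only [Nat.cast_zero, mul_zero, add_zero, one_mul, zero_add, ← mul_add, hs]
      · rw [e3' (0 + k) b (by omega) hb]
        rcases hz b hb with h | h
        · rw [h]; ring
        · rw [h.2]; ring
      · rw [e3' a (0 + k) ha (by omega)]
        rcases hz a ha with h | h
        · rw [h]; ring
        · rw [h.1]; ring
      · rw [e3' (a + k) b (by omega) hb, e3' a (b + k) ha (by omega)]; ring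
    refine ⟨⟨key m hm h3 ?_, key (2 * m) (by omega) h4 ?_⟩, ?_⟩
    · intro n hn
      by_cases h : n = m
      · left; rw [h, hqm]
      · right; exact h2 _ (by omega) (by omega)
    · intro n hn
      right; exact h2 _ (by omega) (by omega)
    · apply cf_ext
      intro a b
      rw [cf_pd0, cf_pd1, h1]; ring

end

/-- For the singular value `q = -1/m`, the `2m+1` polynomials
`1, x, …, x^{m-1}, x^m - y^m, y^{m-1}, …, y, x^{2m} - y^{2m}` form a basis of the
`q`-harmonic polynomials for the dihedral group `G(m,m,2)`. -/
theorem basis_qHarmonic_dihedral_singular_m {K : Type*} [Field K] [CharZero K] (q : K)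
    (m : ℕ) (hm : 1 ≤ m) (hq : q = -(1 : K) / (m : K)) :
    LinearIndependent K (fun i : Fin (2 * m + 1) =>
      if (i : ℕ) < m then (X 0 : MvPolynomial (Fin 2) K) ^ (i : ℕ)
      else if (i : ℕ) = m then (X 0 : MvPolynomial (Fin 2) K) ^ m - X 1 ^ m
      else if (i : ℕ) < 2 * m then (X 1 : MvPolynomial (Fin 2) K) ^ (2 * m - (i : ℕ))
      else (X 0 : MvPolynomial (Fin 2) K) ^ (2 * m) - X 1 ^ (2 * m))
    ∧ Submodule.span K (Set.range (fun i : Fin (2 * m + 1) =>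
        if (i : ℕ) < m then (X 0 : MvPolynomial (Fin 2) K) ^ (i : ℕ)
        else if (i : ℕ) = m then (X 0 : MvPolynomial (Fin 2) K) ^ m - X 1 ^ m
        else if (i : ℕ) < 2 * m then (X 1 : MvPolynomial (Fin 2) K) ^ (2 * m - (i : ℕ))
        else (X 0 : MvPolynomial (Fin 2) K) ^ (2 * m) - X 1 ^ (2 * m)))
      = LinearMap.ker (D2 q m) ⊓ LinearMap.ker (D2 q (2 * m)) ⊓
          LinearMap.ker ((pderiv 0).toLinearMap * (pderiv 1).toLinearMap :
            Module.End K (MvPolynomial (Fin 2) K)) := by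
  set v : Fin (2 * m + 1) → MvPolynomial (Fin 2) K := fun i =>
      if (i : ℕ) < m then (X 0 : MvPolynomial (Fin 2) K) ^ (i : ℕ)
      else if (i : ℕ) = m then (X 0 : MvPolynomial (Fin 2) K) ^ m - X 1 ^ m
      else if (i : ℕ) < 2 * m then (X 1 : MvPolynomial (Fin 2) K) ^ (2 * m - (i : ℕ))
      else (X 0 : MvPolynomial (Fin 2) K) ^ (2 * m) - X 1 ^ (2 * m) with hv
  let φ : Fin (2 * m + 1) → (MvPolynomial (Fin 2) K →ₗ[K] K) := fun i =>
    if (i : ℕ) ≤ m then cf i 0 else if (i : ℕ) < 2 * m then cf 0 (2 * m - i) else cf (2 * m) 0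
  have hφ : ∀ i j, φ i (v j) = if i = j then 1 else 0 := by
    intro i j
    have hi := i.2
    have hj := j.2
    simp only [φ, hv, Fin.ext_iff]
    split_ifs <;> simp only [map_sub, cf_X0, cf_X1, and_true, true_and, and_false, false_and] <;> split_ifs <;> first | omega | (simp; done) | grind
  have hmem : ∀ j, v j ∈ LinearMap.ker (D2 q m) ⊓ LinearMap.ker (D2 q (2 * m)) ⊓
          LinearMap.ker ((pderiv 0).toLinearMap * (pderiv 1).toLinearMap :
            Module.End K (MvPolynomial (Fin 2) K)) := by
    intro j
    rw [mem_ker_iff q m hm hq]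
    have hj := j.2
    refine ⟨?_, ?_, ?_, ?_⟩
    · intro a b
      simp only [hv]
      split_ifs <;> simp only [map_sub, cf_X0, cf_X1, and_true, true_and, and_false, false_and] <;> split_ifs <;> first | omega | (simp; done) | grind
    · intro d h1 h2
      simp only [hv]
      constructor <;> split_ifs <;> simp only [map_sub, cf_X0, cf_X1, and_true, true_and, and_false, false_and] <;> split_ifs <;>
        first | omega | (simp; done) | grind
    · simp only [hv]
      split_ifs <;> simp only [map_sub, cf_X0, cf_X1, and_true, true_and, and_false, false_and] <;> split_ifs <;> first | omega | (simp; done) | grind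
    · simp only [hv]
      split_ifs <;> simp only [map_sub, cf_X0, cf_X1, and_true, true_and, and_false, false_and] <;> split_ifs <;> first | omega | (simp; done) | grind
  have hsum : ∀ (c : Fin (2 * m + 1) → K) i, φ i (∑ j, c j • v j) = c i := by
    intro c i
    simp [map_sum, hφ]
  constructor
  · rw [Fintype.linearIndependent_iff]
    intro c hc i
    rw [← hsum c i, hc, map_zero]
  · apply le_antisymm
    · rw [Submodule.span_le]
      rintro _ ⟨j, rfl⟩
      exact hmem j
    · intro f hf
      have hg := Submodule.sub_mem _ hf
        (Submodule.sum_mem _ fun j (_ : j ∈ Finset.univ) => Submodule.smul_mem _ (φ j f) (hmem j))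
      have h0 : ∀ i, φ i (f - ∑ j, φ j f • v j) = 0 := by
        intro i; rw [map_sub, hsum, sub_self]
      generalize hgdef : f - ∑ j, φ j f • v j = g at hg h0
      rw [mem_ker_iff q m hm hq] at hg
      obtain ⟨g1, g2, g3, g4⟩ := hg
      have k1 : ∀ a, a ≤ m → cf a 0 g = 0 := by
        intro a ha
        have := h0 ⟨a, by omega⟩
        simpa [φ, ha] using this
      have k2 : cf (2 * m) 0 g = 0 := by
        have := h0 ⟨2 * m, by omega⟩
        simpa [φ, show ¬ (2 * m ≤ m) by omega] using this
      have k3 : ∀ b, 1 ≤ b → b < m → cf 0 b g = 0 := by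
        intro b hb hb'
        have := h0 ⟨2 * m - b, by omega⟩
        simpa [φ, show ¬ (2 * m - b ≤ m) by omega, show 2 * m - b < 2 * m by omega,
          show 2 * m - (2 * m - b) = b by omega, -tsub_le_iff_right] using this
      rw [k1 m le_rfl, zero_add] at g3
      rw [k2, zero_add] at g4
      have hz : g = 0 := by
        apply cf_ext
        intro a b
        rcases a with _ | a <;> rcases b with _ | b
        · exact k1 0 (by omega)
        · by_cases e1 : b + 1 = m
          · rw [e1]; exact g3
          by_cases e2 : b + 1 = 2 * m
          · rw [e2]; exact g4
          by_cases e3 : b + 1 < m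
          · exact k3 _ (by omega) e3
          · exact (g2 _ (by omega) e2).2
        · by_cases e2 : a + 1 = 2 * m
          · rw [e2]; exact k2
          by_cases e3 : a + 1 ≤ m
          · exact k1 _ e3
          · exact (g2 _ (by omega) e2).1
        · exact g1 a b
      rw [hz, sub_eq_zero] at hgdef
      rw [hgdef]
      exact Submodule.sum_mem _ fun j _ => Submodule.smul_mem _ _ (Submodule.subset_span ⟨j, rfl⟩)
end

section
/- Let m ≥ 1 and let α, β be integers with 0 ≤ α < m and 0 ≤ β < m. Then the binomial B_{α,β} := ⟨β+m⟩_m · x^{α+m} y^β − ⟨α+m⟩_m · x^α y^{β+m} satisfies D_{q,m} B_{α,β} = 0 and D_{q,2m} B_{α,β} = 0 (for any q ∈ K). -/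
open MvPolynomial

lemma pderiv_step {K : Type*} [Field K] (i : Fin 2) (P : MvPolynomial (Fin 2) K)
    (hP : pderiv i P = 0) (e : ℕ) :
    pderiv i (X i ^ e * P) = (e : K) • (X i ^ (e - 1) * P) := by
  rw [Derivation.leibniz, hP, Derivation.leibniz_pow, pderiv_X_self]
  simp only [smul_eq_mul, mul_zero, zero_add, mul_one, nsmul_eq_mul, MvPolynomial.smul_eq_C_mul,
    map_natCast]
  ring

lemma pderiv_iter {K : Type*} [Field K] (i : Fin 2) (P : MvPolynomial (Fin 2) K)
    (hP : pderiv i P = 0) (d k : ℕ) :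
    (((pderiv i).toLinearMap : Module.End K (MvPolynomial (Fin 2) K)) ^ k) (X i ^ d * P)
      = (∏ t ∈ Finset.range k, ((d : K) - (t : K))) • (X i ^ (d - k) * P) := by
  induction k with
  | zero => simp
  | succ k ih =>
    rw [pow_succ', Module.End.mul_apply, ih, map_smul, Derivation.coeFn_coe,
      pderiv_step i P hP, smul_smul, Finset.prod_range_succ, Nat.sub_sub]
    rcases le_or_gt k d with h | h
    · rw [Nat.cast_sub h]
    · have : ∏ t ∈ Finset.range k, ((d : K) - (t : K)) = 0 :=
        Finset.prod_eq_zero (Finset.mem_range.2 h) (sub_self _)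
      rw [this]; simp

lemma part_apply {K : Type*} [Field K] (q : K) (i : Fin 2) (P : MvPolynomial (Fin 2) K)
    (hP : pderiv i P = 0) (d k : ℕ) :
    (((1 + q • (LinearMap.mulLeft K (X i) * (pderiv i).toLinearMap)) *
      ((pderiv i).toLinearMap : Module.End K (MvPolynomial (Fin 2) K)) ^ k : Module.End K (MvPolynomial (Fin 2) K))) (X i ^ d * P)
      = tp q d k • (X i ^ (d - k) * P) := by
  have hE : X i * pderiv i (X i ^ (d - k) * P) = ((d - k : ℕ) : K) • (X i ^ (d - k) * P) := by
    rw [pderiv_step i P hP]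
    rcases Nat.eq_zero_or_pos (d - k) with h | h
    · simp [h]
    · obtain ⟨e, he⟩ := Nat.exists_eq_succ_of_ne_zero h.ne'
      rw [he, Nat.succ_sub_one, mul_smul_comm, Nat.succ_eq_add_one, pow_succ', mul_assoc]
  rw [Module.End.mul_apply, pderiv_iter i P hP, map_smul, LinearMap.add_apply,
    LinearMap.smul_apply, Module.End.mul_apply, Module.End.one_apply,
    LinearMap.mulLeft_apply, Derivation.coeFn_coe, hE, tp]
  rcases le_or_gt k d with h | h
  · rw [Nat.cast_sub h]; module
  · have : ∏ t ∈ Finset.range k, ((d : K) - (t : K)) = 0 :=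
      Finset.prod_eq_zero (Finset.mem_range.2 h) (sub_self _)
    rw [this]; simp

lemma tp_zero {K : Type*} [Field K] (q : K) {d k : ℕ} (h : d < k) : tp q d k = 0 := by
  rw [tp, Finset.prod_eq_zero (Finset.mem_range.2 h) (sub_self _), zero_mul]

lemma D2_monomial {K : Type*} [Field K] (q : K) (k a b : ℕ) :
    D2 q k ((X 0 : MvPolynomial (Fin 2) K) ^ a * X 1 ^ b)
      = tp q a k • (X 0 ^ (a - k) * X 1 ^ b) + tp q b k • (X 0 ^ a * X 1 ^ (b - k)) := by
  have h0 : pderiv (0 : Fin 2) ((X 1 : MvPolynomial (Fin 2) K) ^ b) = 0 := by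
    rw [Derivation.leibniz_pow, pderiv_X_of_ne (by decide)]; simp
  have h1 : pderiv (1 : Fin 2) ((X 0 : MvPolynomial (Fin 2) K) ^ a) = 0 := by
    rw [Derivation.leibniz_pow, pderiv_X_of_ne (by decide)]; simp
  rw [D2, LinearMap.add_apply, part_apply q 0 _ h0, mul_comm (X 0 ^ a) (X 1 ^ b),
    part_apply q 1 _ h1, mul_comm (X 0 ^ a)]

/-- For `0 ≤ α, β < m`, the binomial
`B = ⟨β+m⟩_m x^{α+m} y^β − ⟨α+m⟩_m x^α y^{β+m}` is killed by `D_{q,m}` and `D_{q,2m}`. -/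
theorem binomial_qHarmonic {K : Type*} [Field K] [CharZero K] (q : K)
    (m α β : ℕ) (hm : 1 ≤ m) (hα : α < m) (hβ : β < m) :
    D2 q m (tp q (β + m) m • ((X 0 : MvPolynomial (Fin 2) K) ^ (α + m) * X 1 ^ β)
        - tp q (α + m) m • ((X 0 : MvPolynomial (Fin 2) K) ^ α * X 1 ^ (β + m))) = 0
    ∧ D2 q (2 * m) (tp q (β + m) m • ((X 0 : MvPolynomial (Fin 2) K) ^ (α + m) * X 1 ^ β)
        - tp q (α + m) m • ((X 0 : MvPolynomial (Fin 2) K) ^ α * X 1 ^ (β + m))) = 0 := by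
  constructor
  · rw [map_sub, map_smul, map_smul, D2_monomial, D2_monomial, tp_zero q hα, tp_zero q hβ,
      Nat.add_sub_cancel, Nat.add_sub_cancel]
    module
  · rw [map_sub, map_smul, map_smul, D2_monomial, D2_monomial,
      tp_zero q (show α + m < 2 * m by omega), tp_zero q (show β + m < 2 * m by omega),
      tp_zero q (show α < 2 * m by omega), tp_zero q (show β < 2 * m by omega)]
    simp
end

section
/- Let m ≥ 1 and let α, β be integers with α ≥ m and β ≥ m. Then the determinant of the 3×3 matrix [[⟨α+m⟩_m, ⟨β⟩_m, 0], [0, ⟨α⟩_m, ⟨β+m⟩_m], [⟨α+m⟩_{2m}, 0, ⟨β+m⟩_{2m}]] equals ((α+m)!·(β+m)!/((α−m)!·(β−m)!))·(1 + q(α−m))·(1 + q(β−m))·(2 + q(α+β)). -/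
theorem tp_eq_factorial {K : Type*} [Field K] [CharZero K] (q : K) (n k : ℕ) :
    tp q (n + k) k = ((n + k).factorial : K) / (n.factorial : K) * (1 + q * (n : K)) := by
  have h : (∏ i ∈ Finset.range k, (((n + k : ℕ) : K) - (i : K))) * (n.factorial : K)
      = ((n + k).factorial : K) := by
    have h1 : (∏ i ∈ Finset.range k, (((n + k : ℕ) : K) - (i : K)))
        = ((n + k).descFactorial k : K) := by
      rw [Nat.descFactorial_eq_prod_range, Nat.cast_prod]
      refine Finset.prod_congr rfl fun i hi => ?_
      have := Finset.mem_range.mp hi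
      rw [Nat.cast_sub (by omega)]
    rw [h1, ← Nat.factorial_mul_descFactorial (Nat.le_add_left k n), Nat.add_sub_cancel]
    push_cast
    ring
  have hn : (n.factorial : K) ≠ 0 := by exact_mod_cast n.factorial_ne_zero
  unfold tp
  rw [← h, mul_div_cancel_right₀ _ hn]
  push_cast
  ring

/-- The determinant of the `3×3` system controlling `q`-harmonicity for `G(m,2)`. -/
theorem det_singular_values {K : Type*} [Field K] [CharZero K] (q : K)
    (m α β : ℕ) (hm : 1 ≤ m) (hα : m ≤ α) (hβ : m ≤ β) :
    (!![tp q (α + m) m, tp q β m, 0;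
        0, tp q α m, tp q (β + m) m;
        tp q (α + m) (2 * m), 0, tp q (β + m) (2 * m)] : Matrix (Fin 3) (Fin 3) K).det
      = (((α + m).factorial : K) * ((β + m).factorial : K) /
            (((α - m).factorial : K) * ((β - m).factorial : K)))
          * ((1 + q * ((α : K) - (m : K))) * (1 + q * ((β : K) - (m : K)))
              * (2 + q * ((α : K) + (β : K)))) := by
  obtain ⟨a, rfl⟩ := Nat.exists_eq_add_of_le' hα
  obtain ⟨b, rfl⟩ := Nat.exists_eq_add_of_le' hβ
  have ea : tp q (a + m + m) (2 * m)
      = ((a + m + m).factorial : K) / (a.factorial : K) * (1 + q * (a : K)) := by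
    have := tp_eq_factorial q a (2 * m)
    rwa [show a + 2 * m = a + m + m by ring] at this
  have eb : tp q (b + m + m) (2 * m)
      = ((b + m + m).factorial : K) / (b.factorial : K) * (1 + q * (b : K)) := by
    have := tp_eq_factorial q b (2 * m)
    rwa [show b + 2 * m = b + m + m by ring] at this
  have h1 : (a.factorial : K) ≠ 0 := by exact_mod_cast a.factorial_ne_zero
  have h2 : (b.factorial : K) ≠ 0 := by exact_mod_cast b.factorial_ne_zero
  have h3 : ((a + m).factorial : K) ≠ 0 := by exact_mod_cast (a + m).factorial_ne_zero
  have h4 : ((b + m).factorial : K) ≠ 0 := by exact_mod_cast (b + m).factorial_ne_zero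
  rw [Matrix.det_fin_three]
  simp only [Matrix.of_apply, Matrix.cons_val', Matrix.cons_val_zero, Matrix.cons_val_one,
    Matrix.cons_val]
  rw [ea, eb, tp_eq_factorial q (a + m) m, tp_eq_factorial q (b + m) m,
    tp_eq_factorial q a m, tp_eq_factorial q b m, Nat.add_sub_cancel, Nat.add_sub_cancel]
  push_cast
  field_simp
  ring
end

section
/- Let m ≥ 1 and suppose that q ≠ −a/b for all integers a, b with 1 ≤ a ≤ 2 ≤ b (equivalently, a + q·b ≠ 0 for all such a, b). Then the 2m² polynomials {x^α y^β : 0 ≤ α < m, 0 ≤ β < m} ∪ {⟨β+m⟩_m · x^{α+m} y^β − ⟨α+m⟩_m · x^α y^{β+m} : 0 ≤ α < m, 0 ≤ β < m} form a K-basis of the space H_q(G(m,2)) := {f ∈ K[x,y] : D_{q,m} f = 0, D_{q,2m} f = 0} of q-harmonic polynomials for G(m,2). In particular this space has dimension 2m², the dimension of the regular representation of G(m,2). -/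
open MvPolynomial

/-- The claimed basis of the `q`-harmonic polynomials for `G(m,2)`: the monomials
`x^α y^β` with `0 ≤ α, β < m`, together with the binomials
`⟨β+m⟩_m x^{α+m} y^β − ⟨α+m⟩_m x^α y^{β+m}` with `0 ≤ α, β < m`. -/
noncomputable def basisGm2 {K : Type*} [Field K] (q : K) (m : ℕ) :
    (Fin m × Fin m) ⊕ (Fin m × Fin m) → MvPolynomial (Fin 2) K :=
  Sum.elim
    (fun ab => (X 0 : MvPolynomial (Fin 2) K) ^ (ab.1 : ℕ) * X 1 ^ (ab.2 : ℕ))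
    (fun ab =>
      tp q ((ab.2 : ℕ) + m) m •
          ((X 0 : MvPolynomial (Fin 2) K) ^ ((ab.1 : ℕ) + m) * X 1 ^ (ab.2 : ℕ))
        - tp q ((ab.1 : ℕ) + m) m •
            ((X 0 : MvPolynomial (Fin 2) K) ^ (ab.1 : ℕ) * X 1 ^ ((ab.2 : ℕ) + m)))


section Helpers
variable {K : Type*} [Field K]

/-- The exponent vector `(i, j)`. -/
noncomputable def ex (i j : ℕ) : Fin 2 →₀ ℕ := Finsupp.single 0 i + Finsupp.single 1 j

lemma ex_zero (i j : ℕ) : ex i j 0 = i := by simp [ex]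
lemma ex_one (i j : ℕ) : ex i j 1 = j := by simp [ex]

lemma ex_inj {i j k l : ℕ} : ex i j = ex k l ↔ i = k ∧ j = l := by
  constructor
  · intro h
    have h0 := DFunLike.congr_fun h 0
    have h1 := DFunLike.congr_fun h 1
    simp only [ex_zero, ex_one] at h0 h1
    exact ⟨h0, h1⟩
  · rintro ⟨rfl, rfl⟩; rfl

lemma eq_ex (s : Fin 2 →₀ ℕ) : s = ex (s 0) (s 1) := by
  ext t
  fin_cases t
  · exact (ex_zero _ _).symm
  · exact (ex_one _ _).symm

lemma ex_add_zero (i j k : ℕ) : ex i j + Finsupp.single 0 k = ex (i + k) j := by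
  simp only [ex, Finsupp.single_add]; abel

lemma ex_add_one (i j k : ℕ) : ex i j + Finsupp.single 1 k = ex i (j + k) := by
  simp only [ex, Finsupp.single_add]; abel

lemma coeff_mono (i j k l : ℕ) :
    coeff (ex i j) ((X 0 : MvPolynomial (Fin 2) K) ^ k * X 1 ^ l)
      = if k = i ∧ l = j then 1 else 0 := by
  rw [X_pow_eq_monomial, X_pow_eq_monomial, monomial_mul, one_mul, coeff_monomial]
  change (if ex k l = ex i j then (1 : K) else 0) = _
  simp only [ex_inj]

/-- Rising product `(a+1)⋯(a+k)`. -/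
noncomputable def rp (K : Type*) [Field K] (k a : ℕ) : K :=
  ∏ i ∈ Finset.range k, (((a + k : ℕ) : K) - (i : K))

lemma rp_succ (k a : ℕ) : rp K (k + 1) a = rp K k (a + 1) * ((a : K) + 1) := by
  unfold rp
  rw [Finset.prod_range_succ]
  congr 1
  · apply Finset.prod_congr rfl
    intro i _
    push_cast; ring
  · push_cast; ring

lemma rp_fact (k a : ℕ) : rp K k a * (a.factorial : K) = ((a + k).factorial : K) := by
  induction k generalizing a with
  | zero => simp [rp]
  | succ k ih =>
    rw [rp_succ, mul_assoc]
    have := ih (a + 1)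
    rw [Nat.factorial_succ] at this
    push_cast at this
    rw [this]
    congr 2
    ring

lemma tp_eq (q : K) (k a : ℕ) : tp q (a + k) k = rp K k a * (1 + q * a) := by
  unfold tp rp
  push_cast
  ring

lemma coeff_X_mul_pderiv (i : Fin 2) (p : MvPolynomial (Fin 2) K) (s : Fin 2 →₀ ℕ) :
    coeff s (X i * pderiv i p) = (s i : K) * coeff s p := by
  rw [coeff_X_mul']
  split_ifs with h
  · rw [coeff_pderiv]
    have h1 : 1 ≤ s i := by
      have := Finsupp.mem_support_iff.1 h
      omega
    have h2 : s - Finsupp.single i 1 + Finsupp.single i 1 = s :=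
      tsub_add_cancel_of_le (by simpa using h1)
    rw [h2, mul_comm]
    congr 1
    simp [Nat.cast_sub h1]
  · rw [Finsupp.notMem_support_iff.1 h]; simp

lemma coeff_pderiv_pow (i : Fin 2) (k : ℕ) (p : MvPolynomial (Fin 2) K) (s : Fin 2 →₀ ℕ) :
    coeff s ((((pderiv i).toLinearMap : Module.End K (MvPolynomial (Fin 2) K)) ^ k) p)
      = rp K k (s i) * coeff (s + Finsupp.single i k) p := by
  induction k generalizing s with
  | zero => simp [rp]
  | succ k ih =>
    rw [pow_succ', Module.End.mul_apply]
    change coeff s (pderiv i _) = _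
    rw [coeff_pderiv, ih, rp_succ]
    have h2 : s + Finsupp.single i 1 + Finsupp.single i k = s + Finsupp.single i (k + 1) := by
      rw [add_assoc, ← Finsupp.single_add, add_comm 1 k]
    rw [h2]
    simp
    ring

lemma coeff_part (q : K) (i : Fin 2) (k : ℕ) (p : MvPolynomial (Fin 2) K) (s : Fin 2 →₀ ℕ) :
    coeff s (((1 + q • (LinearMap.mulLeft K (X i) * (pderiv i).toLinearMap)) *
      ((pderiv i).toLinearMap : Module.End K (MvPolynomial (Fin 2) K)) ^ k :
        Module.End K (MvPolynomial (Fin 2) K)) p)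
      = tp q (s i + k) k * coeff (s + Finsupp.single i k) p := by
  rw [Module.End.mul_apply, tp_eq]
  have h := coeff_pderiv_pow i k p s
  set r := (((pderiv i).toLinearMap : Module.End K (MvPolynomial (Fin 2) K)) ^ k) p
  change coeff s (r + q • (X i * pderiv i r)) = _
  rw [coeff_add, coeff_smul, coeff_X_mul_pderiv, h, smul_eq_mul]
  ring

lemma coeff_D2 (q : K) (k i j : ℕ) (p : MvPolynomial (Fin 2) K) :
    coeff (ex i j) (D2 q k p)
      = tp q (i + k) k * coeff (ex (i + k) j) p + tp q (j + k) k * coeff (ex i (j + k)) p := by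
  unfold D2
  rw [LinearMap.add_apply, coeff_add, coeff_part, coeff_part, ex_zero, ex_one, ex_add_zero,
    ex_add_one]

lemma mem_ker_D2 (q : K) (k : ℕ) (p : MvPolynomial (Fin 2) K) :
    p ∈ LinearMap.ker (D2 q k) ↔ ∀ i j,
      tp q (i + k) k * coeff (ex (i + k) j) p + tp q (j + k) k * coeff (ex i (j + k)) p = 0 := by
  rw [LinearMap.mem_ker]
  constructor
  · intro h i j
    rw [← coeff_D2, h, coeff_zero]
  · intro h
    ext s
    rw [eq_ex s, coeff_D2, h, coeff_zero]

lemma lin_ne [CharZero K] {q : K}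
    (hq : ∀ a b : ℕ, 1 ≤ a → a ≤ 2 → 2 ≤ b → (a : K) + q * (b : K) ≠ 0) (i : ℕ) :
    1 + q * (i : K) ≠ 0 := by
  rcases i with _ | _ | i
  · simp
  · have h := hq 2 2 (by norm_num) le_rfl le_rfl
    intro h'
    apply h
    push_cast at h' ⊢
    linear_combination 2 * h'
  · have h := hq 1 (i + 2) le_rfl (by norm_num) (by omega)
    have e : ((i + 1 + 1 : ℕ) : K) = ((i + 2 : ℕ) : K) := rfl
    rw [e]
    rwa [Nat.cast_one] at h

lemma rp_ne [CharZero K] (k a : ℕ) : rp K k a ≠ 0 := by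
  intro h
  have := rp_fact (K := K) k a
  rw [h, zero_mul] at this
  exact (Nat.cast_ne_zero.2 (Nat.factorial_ne_zero _)) this.symm

lemma rp_double [CharZero K] (m a : ℕ) : rp K (2 * m) a = rp K m a * rp K m (a + m) := by
  have h1 := rp_fact (K := K) (2 * m) a
  have h2 := rp_fact (K := K) m a
  have h3 := rp_fact (K := K) m (a + m)
  have h0 : (a.factorial : K) ≠ 0 := Nat.cast_ne_zero.2 (Nat.factorial_ne_zero _)
  apply mul_right_cancel₀ h0
  rw [h1, two_mul, ← add_assoc, ← h3, ← h2]
  ring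

/-- The key vanishing: coefficients at `(i+m, j+m)` are zero. -/
lemma coeff_mm [CharZero K] {q : K} {m : ℕ} (hm : 1 ≤ m)
    (hq : ∀ a b : ℕ, 1 ≤ a → a ≤ 2 → 2 ≤ b → (a : K) + q * (b : K) ≠ 0)
    {p : MvPolynomial (Fin 2) K} (h1 : p ∈ LinearMap.ker (D2 q m))
    (h2 : p ∈ LinearMap.ker (D2 q (2 * m))) (i j : ℕ) :
    coeff (ex (i + m) (j + m)) p = 0 := by
  rw [mem_ker_D2] at h1 h2
  have e1 := h1 (i + m) j
  have e2 := h1 i (j + m)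
  have e3 := h2 i j
  rw [two_mul, ← add_assoc, ← add_assoc] at e3
  rw [add_assoc i m m, add_assoc j m m, ← two_mul, tp_eq, tp_eq, rp_double, rp_double,
    two_mul, ← add_assoc, ← add_assoc] at e3
  rw [tp_eq, tp_eq] at e1 e2
  have ri := rp_ne (K := K) m i
  have rj := rp_ne (K := K) m j
  have li := lin_ne hq i
  have lj := lin_ne hq j
  have h := hq 2 (i + j + 2 * m) (by norm_num) le_rfl (by omega)
  have key : (rp K m i * rp K m j * (1 + q * i) * (1 + q * j) * (((2 : ℕ) : K) + q * ((i + j + 2 * m : ℕ) : K)))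
      * coeff (ex (i + m) (j + m)) p = 0 := by
    push_cast at e1 e2 e3 ⊢
    linear_combination (rp K m i * (1 + q * i) * (1 + q * (j + m))) * e1
      + (rp K m j * (1 + q * j) * (1 + q * (i + m))) * e2
      - (1 + q * (i + m)) * (1 + q * (j + m)) * e3
  rcases mul_eq_zero.1 key with h' | h'
  · exact absurd h' (by
      refine mul_ne_zero (mul_ne_zero (mul_ne_zero (mul_ne_zero ri rj) li) lj) h)
  · exact h'

lemma eq_zero_of_coeff [CharZero K] {q : K} {m : ℕ} (hm : 1 ≤ m)
    (hq : ∀ a b : ℕ, 1 ≤ a → a ≤ 2 → 2 ≤ b → (a : K) + q * (b : K) ≠ 0)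
    {p : MvPolynomial (Fin 2) K} (h1 : p ∈ LinearMap.ker (D2 q m))
    (h2 : p ∈ LinearMap.ker (D2 q (2 * m)))
    (z1 : ∀ i j, i < m → j < m → coeff (ex i j) p = 0)
    (z2 : ∀ i j, i < m → j < m → coeff (ex (i + m) j) p = 0) : p = 0 := by
  have hmm := coeff_mm hm hq h1 h2
  rw [mem_ker_D2] at h1
  have tne : ∀ a, tp q (a + m) m ≠ 0 := fun a => by
    rw [tp_eq]; exact mul_ne_zero (rp_ne _ _) (lin_ne hq _)
  -- column vanishing for all `i`
  have z3 : ∀ i j, j < m → coeff (ex i j) p = 0 := by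
    intro i j hj
    by_cases hi : i < m
    · exact z1 i j hi hj
    obtain ⟨i, rfl⟩ := Nat.exists_eq_add_of_le' (not_lt.1 hi)
    by_cases hi : i < m
    · exact z2 i j hi hj
    obtain ⟨i, rfl⟩ := Nat.exists_eq_add_of_le' (not_lt.1 hi)
    have := h1 (i + m) j
    rw [hmm, mul_zero, add_zero] at this
    exact (mul_eq_zero.1 this).resolve_left (tne _)
  have z4 : ∀ i j, coeff (ex i j) p = 0 := by
    intro i j
    by_cases hj : j < m
    · exact z3 i j hj
    obtain ⟨j, rfl⟩ := Nat.exists_eq_add_of_le' (not_lt.1 hj)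
    have := h1 i j
    have h0 : coeff (ex (i + m) j) p = 0 := by
      by_cases hj : j < m
      · exact z3 _ _ hj
      obtain ⟨j, rfl⟩ := Nat.exists_eq_add_of_le' (not_lt.1 hj)
      exact hmm _ _
    rw [h0, mul_zero, zero_add] at this
    exact (mul_eq_zero.1 this).resolve_left (tne _)
  ext s
  rw [eq_ex s, z4, coeff_zero]

lemma basis_mem {q : K} {m : ℕ} (s : (Fin m × Fin m) ⊕ (Fin m × Fin m)) :
    basisGm2 (K := K) q m s ∈ LinearMap.ker (D2 q m) ⊓ LinearMap.ker (D2 q (2 * m)) := by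
  rw [Submodule.mem_inf, mem_ker_D2, mem_ker_D2]
  rcases s with ⟨a, b⟩ | ⟨a, b⟩
  · have ha := a.2
    have hb := b.2
    constructor
    all_goals
      intro i j
      simp only [basisGm2, Sum.elim_inl, coeff_mono]
      rw [if_neg (by omega), if_neg (by omega)]
      simp
  · have ha := a.2
    have hb := b.2
    constructor
    · intro i j
      simp only [basisGm2, Sum.elim_inr, coeff_sub, coeff_smul, coeff_mono, smul_eq_mul]
      rw [if_neg (show ¬ ((a : ℕ) = i + m ∧ (b : ℕ) + m = j) by omega),
        if_neg (show ¬ ((a : ℕ) + m = i ∧ (b : ℕ) = j + m) by omega)]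
      by_cases h : (a : ℕ) = i ∧ (b : ℕ) = j
      · obtain ⟨rfl, rfl⟩ := h
        simp
        ring
      · rw [if_neg (by omega), if_neg (by omega)]
        simp
    · intro i j
      simp only [basisGm2, Sum.elim_inr, coeff_sub, coeff_smul, coeff_mono, smul_eq_mul]
      rw [if_neg (by omega), if_neg (by omega), if_neg (by omega), if_neg (by omega)]
      simp

lemma coeff_sum_inl {q : K} {m : ℕ} (g : (Fin m × Fin m) ⊕ (Fin m × Fin m) → K) (i j : Fin m) :
    coeff (ex i j) (∑ s, g s • basisGm2 (K := K) q m s) = g (Sum.inl (i, j)) := by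
  rw [coeff_sum, Finset.sum_eq_single (Sum.inl (i, j))]
  · simp [basisGm2, coeff_mono]
  · rintro (⟨a, b⟩ | ⟨a, b⟩) _ hne
    · simp only [basisGm2, Sum.elim_inl, coeff_smul, coeff_mono]
      rw [if_neg, smul_zero]
      rintro ⟨h, h'⟩
      exact hne (by rw [Fin.ext h, Fin.ext h'])
    · simp only [basisGm2, Sum.elim_inr, coeff_sub, coeff_smul, coeff_mono]
      have := i.2
      have := j.2
      rw [if_neg (by omega), if_neg (by omega)]
      simp
  · simp

lemma coeff_sum_inr {q : K} {m : ℕ} (g : (Fin m × Fin m) ⊕ (Fin m × Fin m) → K) (i j : Fin m) :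
    coeff (ex (i + m) j) (∑ s, g s • basisGm2 (K := K) q m s)
      = g (Sum.inr (i, j)) * tp q (j + m) m := by
  have hi := i.2
  have hj := j.2
  rw [coeff_sum, Finset.sum_eq_single (Sum.inr (i, j))]
  · simp only [basisGm2, Sum.elim_inr, coeff_sub, coeff_smul, coeff_mono]
    rw [if_pos ⟨trivial, trivial⟩, if_neg (by omega)]
    simp
  · rintro (⟨a, b⟩ | ⟨a, b⟩) _ hne
    · have ha := a.2
      simp only [basisGm2, Sum.elim_inl, coeff_smul, coeff_mono]
      rw [if_neg (by omega), smul_zero]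
    · have ha := a.2
      simp only [basisGm2, Sum.elim_inr, coeff_sub, coeff_smul, coeff_mono]
      rw [if_neg, if_neg (by omega)]
      · simp
      rintro ⟨h, h'⟩
      exact hne (by rw [Fin.ext (Nat.add_right_cancel h), Fin.ext h'])
  · simp

end Helpers

/-- For `q ≠ -a/b` with `1 ≤ a ≤ 2 ≤ b`, the `2m²` polynomials of `basisGm2` form a basis
of the `q`-harmonic polynomials for `G(m,2)`; in particular that space has dimension
`2m²`. -/
theorem basis_qHarmonic_Gm2 {K : Type*} [Field K] [CharZero K] (q : K)
    (m : ℕ) (hm : 1 ≤ m)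
    (hq : ∀ a b : ℕ, 1 ≤ a → a ≤ 2 → 2 ≤ b → (a : K) + q * (b : K) ≠ 0) :
    LinearIndependent K (basisGm2 (K := K) q m)
    ∧ Submodule.span K (Set.range (basisGm2 (K := K) q m))
        = LinearMap.ker (D2 q m) ⊓ LinearMap.ker (D2 q (2 * m))
    ∧ Module.finrank K ↥(LinearMap.ker (D2 q m) ⊓ LinearMap.ker (D2 q (2 * m)))
        = 2 * m ^ 2 := by
  have tne : ∀ a, tp q (a + m) m ≠ 0 := fun a => by
    rw [tp_eq]; exact mul_ne_zero (rp_ne _ _) (lin_ne hq _)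
  have hli : LinearIndependent K (basisGm2 (K := K) q m) := by
    rw [Fintype.linearIndependent_iff]
    rintro g hg (⟨i, j⟩ | ⟨i, j⟩)
    · rw [← coeff_sum_inl (q := q) g i j, hg, coeff_zero]
    · have := coeff_sum_inr (q := q) g i j
      rw [hg, coeff_zero] at this
      exact (mul_eq_zero.1 this.symm).resolve_right (tne _)
  have hspan : Submodule.span K (Set.range (basisGm2 (K := K) q m))
        = LinearMap.ker (D2 q m) ⊓ LinearMap.ker (D2 q (2 * m)) := by
    apply le_antisymm
    · rw [Submodule.span_le]
      rintro _ ⟨s, rfl⟩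
      exact basis_mem s
    · intro f hf
      let g : (Fin m × Fin m) ⊕ (Fin m × Fin m) → K := Sum.elim
        (fun ab => coeff (ex ab.1 ab.2) f)
        (fun ab => coeff (ex (ab.1 + m) ab.2) f / tp q (ab.2 + m) m)
      have hs : ∑ s, g s • basisGm2 (K := K) q m s
          ∈ LinearMap.ker (D2 q m) ⊓ LinearMap.ker (D2 q (2 * m)) :=
        Submodule.sum_mem _ fun s _ => Submodule.smul_mem _ _ (basis_mem s)
      have hd := Submodule.sub_mem _ hf hs
      have hz : f - ∑ s, g s • basisGm2 (K := K) q m s = 0 := by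
        apply eq_zero_of_coeff hm hq hd.1 hd.2
        · intro i j hi hj
          have := coeff_sum_inl (q := q) g ⟨i, hi⟩ ⟨j, hj⟩
          simp only [] at this
          rw [coeff_sub, this]
          simp [g]
        · intro i j hi hj
          have := coeff_sum_inr (q := q) g ⟨i, hi⟩ ⟨j, hj⟩
          simp only [] at this
          rw [coeff_sub, this]
          simp [g, div_mul_cancel₀ _ (tne j)]
      rw [sub_eq_zero.1 hz]
      exact Submodule.sum_mem _ fun s _ =>
        Submodule.smul_mem _ _ (Submodule.subset_span ⟨s, rfl⟩)
  refine ⟨hli, hspan, ?_⟩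
  rw [← hspan, finrank_span_eq_card hli]
  simp
  ring
end
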